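/- arXiv:1105.5981 — 7 statements merged into one kernel-verified Lean document; each statement's English description precedes it below -/
import Mathlib

section
/- Let K ≥ 1 and let G_1, …, G_{K+1} be n×n complex matrices with equal determinants such that G_{K+1} is invertible, and define A_i = G_i G_{K+1}^{-1} for i = 1, …, K. Then the following are equivalent: (a) there exist n×n unitary matrices U_1, …, U_{K+1} such that for every i = 1, …, K the matrix T_i := U_iᴴ A_i U_{K+1} is upper triangular with all diagonal entries equal to 1; (b) there exist n×n unitary matrices U_1, …, U_{K+1} and an n×n unitary matrix V such that for every i = 1, …, K+1 the matrix R_i := U_iᴴ G_i V is upper triangular and the diagonals of R_1, …, R_{K+1} all coincide, i.e. (R_i)_{jj} = (R_{K+1})_{jj} for all i and j. Moreover, in passing from (a) to (b) the same matrices U_1, …, U_{K+1} can be kept. -/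
open Matrix

/-- Condition (a): a `K`-GMD of the matrices `A i`, i.e. unitary matrices
`U 0, …, U K` such that each `(U i)ᴴ * A i * U (Fin.last K)` is upper triangular
with all diagonal entries equal to `1`. -/
def KGMDCond (K n : ℕ) (A : Fin K → Matrix (Fin n) (Fin n) ℂ)
    (U : Fin (K + 1) → Matrix (Fin n) (Fin n) ℂ) : Prop :=
  (∀ i, (U i)ᴴ * U i = 1) ∧
  ∀ i : Fin K,
    (∀ k l : Fin n, l < k → ((U i.castSucc)ᴴ * A i * U (Fin.last K)) k l = 0) ∧
    (∀ k : Fin n, ((U i.castSucc)ᴴ * A i * U (Fin.last K)) k k = 1)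

/-- Condition (b): a `(K+1)`-JET of the matrices `G i`, i.e. unitary matrices
`U 0, …, U K` and a unitary matrix `V` such that each `R i := (U i)ᴴ * G i * V`
is upper triangular, and the diagonals of all the `R i` coincide. -/
def JETCond (K n : ℕ) (G : Fin (K + 1) → Matrix (Fin n) (Fin n) ℂ)
    (U : Fin (K + 1) → Matrix (Fin n) (Fin n) ℂ)
    (V : Matrix (Fin n) (Fin n) ℂ) : Prop :=
  (∀ i, (U i)ᴴ * U i = 1) ∧ Vᴴ * V = 1 ∧
  ∀ i : Fin (K + 1),
    (∀ k l : Fin n, l < k → ((U i)ᴴ * G i * V) k l = 0) ∧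
    (∀ j : Fin n,
      ((U i)ᴴ * G i * V) j j = ((U (Fin.last K))ᴴ * G (Fin.last K) * V) j j)


theorem exists_unitary_qr {n : ℕ} (N : Matrix (Fin n) (Fin n) ℂ) :
    ∃ Q : Matrix (Fin n) (Fin n) ℂ, Qᴴ * Q = 1 ∧ (Qᴴ * N).BlockTriangular id := by
  let f : Fin n → EuclideanSpace ℂ (Fin n) := fun j => WithLp.toLp 2 (fun i => N i j)
  let b := InnerProductSpace.gramSchmidtOrthonormalBasis (𝕜 := ℂ)
    (by simp : Module.finrank ℂ (EuclideanSpace ℂ (Fin n)) = Fintype.card (Fin n)) f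
  refine ⟨Matrix.of fun i j => b j i, ?_, ?_⟩
  · ext i j
    have h := orthonormal_iff_ite.mp b.orthonormal i j
    simp only [PiLp.inner_apply, RCLike.inner_apply] at h
    simp only [Matrix.mul_apply, Matrix.conjTranspose_apply, Matrix.of_apply, Matrix.one_apply]
    rw [← h]
    exact Finset.sum_congr rfl fun k _ => mul_comm _ _
  · intro i j hij
    have h : inner ℂ (b i) (f j) = 0 :=
      InnerProductSpace.gramSchmidtOrthonormalBasis_inv_triangular _ f hij
    simp only [PiLp.inner_apply, RCLike.inner_apply] at h
    simp only [Matrix.mul_apply, Matrix.conjTranspose_apply, Matrix.of_apply]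
    rw [← h]
    exact Finset.sum_congr rfl fun k _ => mul_comm _ _

theorem upper_inv {n : ℕ} {M : Matrix (Fin n) (Fin n) ℂ} (hM : IsUnit M)
    (h : M.BlockTriangular id) : (M⁻¹).BlockTriangular id := by
  letI := hM.invertible
  exact blockTriangular_inv_of_blockTriangular h

theorem exists_unitary_rq {n : ℕ} (M : Matrix (Fin n) (Fin n) ℂ) (hM : IsUnit M) :
    ∃ V : Matrix (Fin n) (Fin n) ℂ, Vᴴ * V = 1 ∧ (M * V).BlockTriangular id := by
  obtain ⟨Q, hQ, hR⟩ := exists_unitary_qr M⁻¹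
  refine ⟨Q, hQ, ?_⟩
  have hd : IsUnit M.det := (Matrix.isUnit_iff_isUnit_det M).mp hM
  have hQ' : Q * Qᴴ = 1 := mul_eq_one_comm.mp hQ
  have h1 : (Qᴴ * M⁻¹) * (M * Q) = 1 := by
    rw [Matrix.mul_assoc, ← Matrix.mul_assoc M⁻¹, Matrix.nonsing_inv_mul _ hd, Matrix.one_mul, hQ]
  rw [← Matrix.inv_eq_right_inv h1]
  exact upper_inv (IsUnit.of_mul_eq_one _ h1) hR

theorem upper_mul_diag {n : ℕ} {S T : Matrix (Fin n) (Fin n) ℂ}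
    (hS : S.BlockTriangular id) (hT : T.BlockTriangular id) (j : Fin n) :
    (S * T) j j = S j j * T j j := by
  rw [Matrix.mul_apply]
  refine Finset.sum_eq_single j (fun k _ hk => ?_) (by simp)
  rcases lt_or_gt_of_ne hk with h | h
  · rw [hS (show id k < id j from h), zero_mul]
  · rw [hT (show id j < id k from h), mul_zero]

theorem key_mul {n : ℕ} (U G H W V : Matrix (Fin n) (Fin n) ℂ) (hH : IsUnit H)
    (hW : Wᴴ * W = 1) :
    (Uᴴ * (G * H⁻¹) * W) * (Wᴴ * H * V) = Uᴴ * G * V := by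
  have hd : IsUnit H.det := (Matrix.isUnit_iff_isUnit_det H).mp hH
  have hW' : W * Wᴴ = 1 := mul_eq_one_comm.mp hW
  calc _ = Uᴴ * G * (H⁻¹ * ((W * Wᴴ) * H)) * V := by simp only [Matrix.mul_assoc]
    _ = _ := by rw [hW', Matrix.one_mul, Matrix.nonsing_inv_mul _ hd, Matrix.mul_one]

theorem isUnit_conj {n : ℕ} {H W V : Matrix (Fin n) (Fin n) ℂ} (hH : IsUnit H)
    (hW : Wᴴ * W = 1) (hV : Vᴴ * V = 1) : IsUnit (Wᴴ * H * V) :=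
  ((IsUnit.of_mul_eq_one _ hW).mul hH).mul (IsUnit.of_mul_eq_one _ (mul_eq_one_comm.mp hV))

/-- `K`-GMD of `A i = G i * (G (Fin.last K))⁻¹` is equivalent to `(K+1)`-JET of
the `G i`; moreover, in passing from (a) to (b) the same unitaries `U i` can be
kept. -/
theorem kGMD_iff_jet (K n : ℕ) (hK : 1 ≤ K)
    (G : Fin (K + 1) → Matrix (Fin n) (Fin n) ℂ)
    (hdet : ∀ i j, (G i).det = (G j).det)
    (hinv : IsUnit (G (Fin.last K)))
    (A : Fin K → Matrix (Fin n) (Fin n) ℂ)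
    (hA : ∀ i : Fin K, A i = G i.castSucc * (G (Fin.last K))⁻¹) :
    ((∃ U, KGMDCond K n A U) ↔ (∃ U V, JETCond K n G U V)) ∧
    (∀ U, KGMDCond K n A U → ∃ V, JETCond K n G U V) := by
  have hab : ∀ U, KGMDCond K n A U → ∃ V, JETCond K n G U V := by
    rintro U ⟨hU, hT⟩
    obtain ⟨V, hV, hR⟩ := exists_unitary_rq ((U (Fin.last K))ᴴ * G (Fin.last K))
      ((IsUnit.of_mul_eq_one _ (hU _)).mul hinv)
    refine ⟨V, hU, hV, fun i => ?_⟩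
    induction i using Fin.lastCases with
    | last => exact ⟨fun k l h => hR h, fun j => rfl⟩
    | cast i =>
      obtain ⟨hT1, hT2⟩ := hT i
      have hT1' : ((U i.castSucc)ᴴ * A i * U (Fin.last K)).BlockTriangular id :=
        fun k l h => hT1 k l h
      rw [← key_mul (U i.castSucc) (G i.castSucc) (G (Fin.last K)) (U (Fin.last K)) V hinv (hU _),
        ← hA]
      refine ⟨fun k l h => (hT1'.mul hR) h, fun j => ?_⟩
      rw [upper_mul_diag hT1' hR, hT2, one_mul]
  refine ⟨⟨fun ⟨U, h⟩ => ⟨U, hab U h⟩, ?_⟩, hab⟩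
  rintro ⟨U, V, hU, hV, hJ⟩
  refine ⟨U, hU, fun i => ?_⟩
  have hRu := isUnit_conj hinv (hU (Fin.last K)) hV
  have hR : ((U (Fin.last K))ᴴ * G (Fin.last K) * V).BlockTriangular id :=
    fun k l h => (hJ (Fin.last K)).1 k l h
  have hRi : ((U i.castSucc)ᴴ * G i.castSucc * V).BlockTriangular id :=
    fun k l h => (hJ i.castSucc).1 k l h
  have hk := key_mul (U i.castSucc) (G i.castSucc) (G (Fin.last K)) (U (Fin.last K)) V hinv (hU _)
  rw [← hA] at hk
  have hdR := (Matrix.isUnit_iff_isUnit_det _).mp hRu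
  have hT : ((U i.castSucc)ᴴ * A i * U (Fin.last K)).BlockTriangular id := by
    have := hRi.mul (upper_inv hRu hR)
    rwa [← hk, Matrix.mul_nonsing_inv_cancel_right _ _ hdR] at this
  refine ⟨fun k l h => hT h, fun j => ?_⟩
  have h0 : ((U (Fin.last K))ᴴ * G (Fin.last K) * V) j j ≠ 0 := by
    rw [Matrix.det_of_isUpperTriangular hR] at hdR
    exact Finset.prod_ne_zero_iff.mp hdR.ne_zero j (Finset.mem_univ j)
  have hj := (hJ i.castSucc).2 j
  rw [← hk, upper_mul_diag hT hR] at hj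
  exact mul_right_cancel₀ h0 (by rw [hj, one_mul])
end

section
/- Let K ≥ 1, let 1 ≤ m ≤ n, and let G_1, …, G_{K+1} be n×n complex matrices with equal determinants such that G_{K+1} is invertible; define A_i = G_i G_{K+1}^{-1} for i = 1, …, K. Suppose there exist n×m matrices U_1, …, U_{K+1} with orthonormal columns such that for each i = 1, …, K the m×m matrix U_iᴴ A_i U_{K+1} is upper triangular with all diagonal entries equal to 1. Then there exists an n×m matrix V with orthonormal columns such that for every i = 1, …, K+1 the m×m matrix R_i := U_iᴴ G_i V is upper triangular and the diagonals of R_1, …, R_{K+1} all coincide, i.e. (R_i)_{jj} = (R_{K+1})_{jj} for all i and j. -/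
open Matrix

lemma exists_triangular_orthonormalization {n m : ℕ} (W : Matrix (Fin n) (Fin m) ℂ)
    (hW : Function.Injective W.mulVec) :
    ∃ S : Matrix (Fin m) (Fin m) ℂ, (∀ k l : Fin m, l < k → S k l = 0) ∧
      (W * S)ᴴ * (W * S) = 1 := by
  let w : Fin m → EuclideanSpace ℂ (Fin n) := fun j => WithLp.toLp 2 (fun i => W i j)
  have hw : LinearIndependent ℂ w := by
    have h1 : LinearIndependent ℂ W.col := Matrix.mulVec_injective_iff.mp hW
    exact h1.map' (WithLp.linearEquiv 2 ℂ (Fin n → ℂ)).symm.toLinearMap (LinearEquiv.ker _)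
  let e := InnerProductSpace.gramSchmidtNormed ℂ w
  have he : Orthonormal ℂ e := InnerProductSpace.gramSchmidtNormed_orthonormal hw
  have hmem : ∀ j, ∃ c : Fin m → ℂ, (∀ k, j < k → c k = 0) ∧ ∑ k, c k • w k = e j := by
    intro j
    have h2 : e j ∈ Submodule.span ℂ (w '' (↑(Finset.Iic j) : Set (Fin m))) := by
      rw [Finset.coe_Iic]
      exact Submodule.smul_mem _ _ (InnerProductSpace.gramSchmidt_mem_span ℂ w le_rfl)
    rw [Submodule.mem_span_image_finset_iff_exists_fun'] at h2
    obtain ⟨c, hc⟩ := h2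
    refine ⟨fun k => if k ≤ j then c k else 0, fun k hk => by simp [hk], ?_⟩
    rw [← hc]
    simp only [ite_smul, zero_smul, ← Finset.sum_filter]
    refine Finset.sum_congr ?_ fun _ _ => rfl
    ext x
    simp
  choose c hc0 hc using hmem
  refine ⟨Matrix.of fun k l => c l k, fun k l h => hc0 l k h, ?_⟩
  have hV : ∀ i j, (W * Matrix.of fun k l => c l k) i j = e j i := by
    intro i j
    rw [← hc j]
    simp [Matrix.mul_apply, w, mul_comm]
  ext a b
  have := (orthonormal_iff_ite.mp he) a b
  rw [Matrix.mul_apply, Matrix.one_apply, ← this]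
  simp only [Matrix.conjTranspose_apply, hV, PiLp.inner_apply]
  simp [mul_comm]

/-- Rectangular version of the passage from a `K`-GMD to a `(K+1)`-JET:
given `n × m` matrices `U i` with orthonormal columns such that each
`(U i)ᴴ * A i * U (Fin.last K)` is upper triangular with unit diagonal,
where `A i = G i * (G (Fin.last K))⁻¹`, there is an `n × m` matrix `V` with
orthonormal columns such that each `R i := (U i)ᴴ * G i * V` is upper
triangular and all the `R i` have the same diagonal. -/
theorem jet_of_kGMD_rect (K n m : ℕ) (hK : 1 ≤ K) (hm : 1 ≤ m) (hmn : m ≤ n)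
    (G : Fin (K + 1) → Matrix (Fin n) (Fin n) ℂ)
    (hdet : ∀ i j, (G i).det = (G j).det)
    (hinv : IsUnit (G (Fin.last K)))
    (A : Fin K → Matrix (Fin n) (Fin n) ℂ)
    (hA : ∀ i : Fin K, A i = G i.castSucc * (G (Fin.last K))⁻¹)
    (U : Fin (K + 1) → Matrix (Fin n) (Fin m) ℂ)
    (hU : ∀ i, (U i)ᴴ * U i = 1)
    (htri : ∀ i : Fin K,
      ∀ k l : Fin m, l < k → ((U i.castSucc)ᴴ * A i * U (Fin.last K)) k l = 0)
    (hdiag : ∀ i : Fin K,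
      ∀ k : Fin m, ((U i.castSucc)ᴴ * A i * U (Fin.last K)) k k = 1) :
    ∃ V : Matrix (Fin n) (Fin m) ℂ, Vᴴ * V = 1 ∧
      (∀ i : Fin (K + 1), ∀ k l : Fin m, l < k → ((U i)ᴴ * G i * V) k l = 0) ∧
      (∀ i : Fin (K + 1), ∀ j : Fin m,
        ((U i)ᴴ * G i * V) j j =
          ((U (Fin.last K))ᴴ * G (Fin.last K) * V) j j) := by
  have hd : IsUnit (G (Fin.last K)).det := (Matrix.isUnit_iff_isUnit_det _).mp hinv
  obtain ⟨S, hS, hV⟩ := exists_triangular_orthonormalization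
    ((G (Fin.last K))⁻¹ * U (Fin.last K)) (by
      apply Function.LeftInverse.injective
        (g := ((U (Fin.last K))ᴴ * G (Fin.last K)).mulVec)
      intro x
      rw [Matrix.mulVec_mulVec, Matrix.mul_assoc, Matrix.mul_nonsing_inv_cancel_left _ _ hd,
        hU, Matrix.one_mulVec])
  have key : ∀ i, ∃ T : Matrix (Fin m) (Fin m) ℂ, (∀ k l, l < k → T k l = 0) ∧
      (∀ k, T k k = 1) ∧
      (U i)ᴴ * G i * ((G (Fin.last K))⁻¹ * U (Fin.last K) * S) = T * S := by
    intro i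
    refine Fin.lastCases ?_ (fun i => ?_) i
    · refine ⟨1, fun k l h => Matrix.one_apply_ne h.ne', fun k => Matrix.one_apply_eq k, ?_⟩
      rw [← hU (Fin.last K)]
      simp only [Matrix.mul_assoc]
      rw [Matrix.mul_nonsing_inv_cancel_left _ _ hd]
    · refine ⟨_, htri i, hdiag i, ?_⟩
      rw [hA]
      simp only [Matrix.mul_assoc]
  have hdg : ∀ i j, ((U i)ᴴ * G i * ((G (Fin.last K))⁻¹ * U (Fin.last K) * S)) j j = S j j := by
    intro i j
    obtain ⟨T, hT, hT1, h⟩ := key i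
    rw [h, Matrix.mul_apply, Finset.sum_eq_single j, hT1, one_mul]
    · intro b _ hb
      rcases lt_or_gt_of_ne hb with h | h
      · rw [hT _ _ h, zero_mul]
      · rw [hS _ _ h, mul_zero]
    · simp
  refine ⟨_, hV, fun i k l hkl => ?_, fun i j => by rw [hdg, hdg]⟩
  obtain ⟨T, hT, hT1, h⟩ := key i
  rw [h, Matrix.mul_apply]
  refine Finset.sum_eq_zero fun b _ => ?_
  rcases lt_or_ge b k with h | h
  · rw [hT _ _ h, zero_mul]
  · rw [hS _ _ (hkl.trans_le h), mul_zero]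
end

section
/- Let r_1 > r_2 > 0 be real numbers with r_1 r_2 = 1, let x_1, x_2 ∈ ℝ, and for i = 1, 2 let R_i be the real 2×2 upper-triangular matrix with rows (r_1, x_i) and (0, r_2). Then there exist complex 2×2 unitary matrices U_1, U_2, V such that for i = 1, 2 the matrix U_iᴴ R_i V is upper triangular with both diagonal entries equal to 1, if and only if r_2 ((x_1 + x_2)/2)² ≤ r_2 + x_1 x_2 / (r_1 − r_2). -/
open Matrix

lemma gmd_col_norm (U : Matrix (Fin 2) (Fin 2) ℂ) (h : Uᴴ * U = 1) :
    Complex.normSq (U 0 0) + Complex.normSq (U 1 0) = 1 := by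
  have h0 := congrFun (congrFun h 0) 0
  simp only [Matrix.mul_apply, Fin.sum_univ_two, Matrix.conjTranspose_apply, Matrix.one_apply_eq] at h0
  have e : ∀ z : ℂ, star z * z = (Complex.normSq z : ℂ) := fun z => by
    rw [Complex.normSq_eq_conj_mul_self]; rfl
  rw [e, e] at h0
  exact_mod_cast h0

lemma gmd_fwd (r₁ r₂ x : ℝ) (U V : Matrix (Fin 2) (Fin 2) ℂ) (hU : Uᴴ * U = 1)
    (h1 : ∀ k l : Fin 2, l < k → (Uᴴ * !![(r₁ : ℂ), (x : ℂ); 0, (r₂ : ℂ)] * V) k l = 0)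
    (h2 : ∀ k : Fin 2, (Uᴴ * !![(r₁ : ℂ), (x : ℂ); 0, (r₂ : ℂ)] * V) k k = 1) :
    Complex.normSq (r₁ * V 0 0 + x * V 1 0) + Complex.normSq (r₂ * V 1 0) = 1 := by
  have hU' : U * Uᴴ = 1 := mul_eq_one_comm.mp hU
  have h10 := h1 1 0 (by decide)
  have h00 := h2 0
  have key : U * (Uᴴ * !![(r₁ : ℂ), (x : ℂ); 0, (r₂ : ℂ)] * V)
      = !![(r₁ : ℂ), (x : ℂ); 0, (r₂ : ℂ)] * V := by
    rw [Matrix.mul_assoc, ← Matrix.mul_assoc, hU', Matrix.one_mul]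
  generalize Uᴴ * !![(r₁ : ℂ), (x : ℂ); 0, (r₂ : ℂ)] * V = T at *
  have k0 := congrFun (congrFun key 0) 0
  have k1 := congrFun (congrFun key 1) 0
  simp [Matrix.mul_apply, Fin.sum_univ_two, h10, h00] at k0 k1
  have := gmd_col_norm U hU
  rwa [k0, k1] at this

lemma gmd_unitary (p q : ℂ) (h : Complex.normSq p + Complex.normSq q = 1) :
    (!![p, -star q; q, star p])ᴴ * !![p, -star q; q, star p] = 1 := by
  have h' : star p * p + star q * q = 1 := by
    have e : ∀ z : ℂ, star z * z = (Complex.normSq z : ℂ) := fun z => by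
      rw [Complex.normSq_eq_conj_mul_self]; rfl
    rw [e, e]; exact_mod_cast h
  ext i j
  fin_cases i <;> fin_cases j <;>
    simp [Matrix.mul_apply, Fin.sum_univ_two] at h' ⊢ <;>
    first
    | linear_combination h'
    | ring

lemma gmd_bwd (r₁ r₂ x : ℝ) (hdet : r₁ * r₂ = 1) (a b : ℂ)
    (hab : Complex.normSq a + Complex.normSq b = 1)
    (h : Complex.normSq (r₁ * a + x * b) + Complex.normSq (r₂ * b) = 1) :
    ∃ U : Matrix (Fin 2) (Fin 2) ℂ, Uᴴ * U = 1 ∧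
      (∀ k l : Fin 2, l < k → (Uᴴ * !![(r₁ : ℂ), (x : ℂ); 0, (r₂ : ℂ)] *
        !![a, -star b; b, star a]) k l = 0) ∧
      (∀ k : Fin 2, (Uᴴ * !![(r₁ : ℂ), (x : ℂ); 0, (r₂ : ℂ)] *
        !![a, -star b; b, star a]) k k = 1) := by
  have e : ∀ z : ℂ, star z * z = (Complex.normSq z : ℂ) := fun z => by
    rw [Complex.normSq_eq_conj_mul_self]; rfl
  have hab' : star a * a + star b * b = 1 := by
    rw [e, e]; exact_mod_cast hab
  have h' : star (r₁ * a + x * b) * (r₁ * a + x * b) + star (r₂ * b) * (r₂ * b) = 1 := by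
    rw [e, e]; exact_mod_cast h
  have hd : (r₁ : ℂ) * r₂ = 1 := by exact_mod_cast hdet
  refine ⟨_, gmd_unitary _ _ h, ?_, ?_⟩
  · intro k l hkl
    fin_cases k <;> fin_cases l <;> simp at hkl
    simp [Matrix.mul_apply, Fin.sum_univ_two]
    ring
  · intro k
    fin_cases k
    · simp [Matrix.mul_apply, Fin.sum_univ_two] at h' ⊢
      linear_combination h'
    · simp [Matrix.mul_apply, Fin.sum_univ_two] at hab' ⊢
      linear_combination (r₁ * r₂ : ℂ) * hab' + hd

lemma gmd_norm_expand (r₁ r₂ x : ℝ) (a b : ℂ) :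
    Complex.normSq (r₁ * a + x * b) + Complex.normSq (r₂ * b) =
    r₁ ^ 2 * Complex.normSq a + 2 * r₁ * x * (a.re * b.re + a.im * b.im)
      + (x ^ 2 + r₂ ^ 2) * Complex.normSq b := by
  simp [Complex.normSq_apply]
  ring

lemma gmd_cond (r₁ r₂ x₁ x₂ : ℝ) (hr : r₂ < r₁) (hr₂ : 0 < r₂) (hdet : r₁ * r₂ = 1) :
    r₂ * ((x₁ + x₂) / 2) ^ 2 ≤ r₂ + x₁ * x₂ / (r₁ - r₂) ↔
    (r₂ * ((x₁ + x₂) / 2)) ^ 2 ≤ (x₁ * x₂ + 1 - r₂ ^ 2) / (r₁ ^ 2 - 1) := by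
  have hd : 0 < r₁ - r₂ := sub_pos.mpr hr
  have h1 : 0 < r₁ := hr₂.trans hr
  have : (x₁ * x₂ + 1 - r₂ ^ 2) / (r₁ ^ 2 - 1) = r₂ * (r₂ + x₁ * x₂ / (r₁ - r₂)) := by
    have e : r₁ ^ 2 - 1 = r₁ * (r₁ - r₂) := by linear_combination hdet
    rw [e]
    field_simp
    linear_combination (-(x₁ * x₂) - r₂ * r₁ + r₂ ^ 2 - 1) * hdet
  rw [this, show (r₂ * ((x₁ + x₂) / 2)) ^ 2 = r₂ * (r₂ * ((x₁ + x₂) / 2) ^ 2) by ring,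
    mul_le_mul_iff_right₀ hr₂]

/-- Necessary and sufficient condition for the existence of a simultaneous
unit-diagonal triangularization (2-GMD) of the pair of real `2 × 2` matrices
`R i = !![r₁, x i; 0, r₂]` (viewed as complex matrices) with `r₁ > r₂ > 0` and
`r₁ * r₂ = 1`, in terms of the JET parameters `r₁, r₂, x₁, x₂`. -/
theorem twoGMD_two_by_two_iff (r₁ r₂ x₁ x₂ : ℝ)
    (hr : r₂ < r₁) (hr₂ : 0 < r₂) (hdet : r₁ * r₂ = 1) :
    (∃ U₁ U₂ V : Matrix (Fin 2) (Fin 2) ℂ,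
      U₁ᴴ * U₁ = 1 ∧ U₂ᴴ * U₂ = 1 ∧ Vᴴ * V = 1 ∧
      (∀ k l : Fin 2, l < k →
        (U₁ᴴ * !![(r₁ : ℂ), (x₁ : ℂ); 0, (r₂ : ℂ)] * V) k l = 0) ∧
      (∀ k : Fin 2, (U₁ᴴ * !![(r₁ : ℂ), (x₁ : ℂ); 0, (r₂ : ℂ)] * V) k k = 1) ∧
      (∀ k l : Fin 2, l < k →
        (U₂ᴴ * !![(r₁ : ℂ), (x₂ : ℂ); 0, (r₂ : ℂ)] * V) k l = 0) ∧
      (∀ k : Fin 2, (U₂ᴴ * !![(r₁ : ℂ), (x₂ : ℂ); 0, (r₂ : ℂ)] * V) k k = 1)) ↔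
    r₂ * ((x₁ + x₂) / 2) ^ 2 ≤ r₂ + x₁ * x₂ / (r₁ - r₂) := by
  rw [gmd_cond r₁ r₂ x₁ x₂ hr hr₂ hdet]
  have h1 : 0 < r₁ := hr₂.trans hr
  have hr11 : 0 < r₁ ^ 2 - 1 := by nlinarith
  have hr22 : 0 < 1 - r₂ ^ 2 := by nlinarith
  constructor
  · rintro ⟨U₁, U₂, V, hU₁, hU₂, hV, a1, b1, a2, b2⟩
    have n1 := gmd_fwd r₁ r₂ x₁ U₁ V hU₁ a1 b1
    have n2 := gmd_fwd r₁ r₂ x₂ U₂ V hU₂ a2 b2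
    have n0 := gmd_col_norm V hV
    rw [gmd_norm_expand] at n1 n2
    have cs : ((V 0 0).re * (V 1 0).re + (V 0 0).im * (V 1 0).im) ^ 2
        ≤ Complex.normSq (V 0 0) * Complex.normSq (V 1 0) := by
      simp only [Complex.normSq_apply]
      nlinarith [sq_nonneg ((V 0 0).re * (V 1 0).im - (V 0 0).im * (V 1 0).re)]
    have hB := Complex.normSq_nonneg (V 1 0)
    generalize (V 0 0).re * (V 1 0).re + (V 0 0).im * (V 1 0).im = t at *
    generalize Complex.normSq (V 0 0) = A at *
    generalize Complex.normSq (V 1 0) = B at *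
    rw [le_div_iff₀ hr11]
    by_cases hx : x₁ = x₂
    · subst hx
      have : (r₂ * ((x₁ + x₁) / 2)) ^ 2 * (r₁ ^ 2 - 1) = x₁ ^ 2 * (1 - r₂ ^ 2) := by
        linear_combination x₁ ^ 2 * (r₁ * r₂ + 1) * hdet
      rw [this]
      nlinarith [mul_nonneg (sq_nonneg x₁) (sq_nonneg r₂)]
    · have hBpos : 0 < B := by
        rcases hB.lt_or_eq with h | h
        · exact h
        · exfalso
          subst h
          have ht : t = 0 := by
            have : t ^ 2 ≤ 0 := by simpa using cs
            nlinarith [pow_eq_zero_iff (two_ne_zero) |>.mp (le_antisymm this (sq_nonneg t))]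
          subst ht
          nlinarith
      have ht : 2 * r₁ * t + (x₁ + x₂) * B = 0 := by
        apply mul_left_cancel₀ (sub_ne_zero.mpr hx)
        linear_combination n1 - n2
      have ht' : t = - (r₂ * ((x₁ + x₂) / 2)) * B := by
        linear_combination r₂ / 2 * ht - t * hdet
      have hA : (r₁ ^ 2 - 1) * A = (x₁ * x₂ + 1 - r₂ ^ 2) * B := by
        linear_combination n1 - n0 - x₁ * ht
      have hfin : (r₂ * ((x₁ + x₂) / 2)) ^ 2 * (r₁ ^ 2 - 1) * B ^ 2
          ≤ (x₁ * x₂ + 1 - r₂ ^ 2) * B ^ 2 := by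
        have := mul_le_mul_of_nonneg_left cs hr11.le
        rw [ht'] at this
        have e : (r₁ ^ 2 - 1) * (A * B) = (x₁ * x₂ + 1 - r₂ ^ 2) * B ^ 2 := by
          linear_combination B * hA
        rw [e] at this
        linarith
      exact le_of_mul_le_mul_right hfin (by positivity)
  · intro h
    obtain ⟨s, hs⟩ : ∃ s, s = (x₁ * x₂ + 1 - r₂ ^ 2) / (r₁ ^ 2 - 1) := ⟨_, rfl⟩
    obtain ⟨t, ht⟩ : ∃ t, t = r₂ * ((x₁ + x₂) / 2) := ⟨_, rfl⟩
    rw [← hs, ← ht] at h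
    have hs' : s * (r₁ ^ 2 - 1) = x₁ * x₂ + 1 - r₂ ^ 2 := by
      rw [hs]; field_simp
    have hs0 : 0 ≤ s := (sq_nonneg t).trans h
    obtain ⟨c, hc⟩ : ∃ c, c = (Real.sqrt (1 + s))⁻¹ := ⟨_, rfl⟩
    have hcs : c ^ 2 * (1 + s) = 1 := by
      rw [hc, inv_pow, Real.sq_sqrt (by linarith)]
      field_simp
    obtain ⟨w, hw⟩ : ∃ w, w = Real.sqrt (s - t ^ 2) := ⟨_, rfl⟩
    have hw2 : w ^ 2 = s - t ^ 2 := by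
      rw [hw, Real.sq_sqrt (by linarith)]
    obtain ⟨a, ha⟩ : ∃ a : ℂ, a = ⟨-t * c, w * c⟩ := ⟨_, rfl⟩
    obtain ⟨b, hb⟩ : ∃ b : ℂ, b = ⟨c, 0⟩ := ⟨_, rfl⟩
    have na : Complex.normSq a = s * c ^ 2 := by
      rw [ha, Complex.normSq_mk]
      linear_combination c ^ 2 * hw2
    have nb : Complex.normSq b = c ^ 2 := by
      rw [hb, Complex.normSq_mk]; ring
    have nt : a.re * b.re + a.im * b.im = -t * c ^ 2 := by
      rw [ha, hb]; simp; ring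
    have hab : Complex.normSq a + Complex.normSq b = 1 := by
      rw [na, nb]; linear_combination hcs
    have g1 : Complex.normSq (r₁ * a + x₁ * b) + Complex.normSq (r₂ * b) = 1 := by
      rw [gmd_norm_expand, na, nb, nt, ht]
      linear_combination c ^ 2 * hs' + hcs - c ^ 2 * x₁ * (x₁ + x₂) * hdet
    have g2 : Complex.normSq (r₁ * a + x₂ * b) + Complex.normSq (r₂ * b) = 1 := by
      rw [gmd_norm_expand, na, nb, nt, ht]
      linear_combination c ^ 2 * hs' + hcs - c ^ 2 * x₂ * (x₁ + x₂) * hdet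
    obtain ⟨U₁, u1, p1, q1⟩ := gmd_bwd r₁ r₂ x₁ hdet a b hab g1
    obtain ⟨U₂, u2, p2, q2⟩ := gmd_bwd r₁ r₂ x₂ hdet a b hab g2
    exact ⟨U₁, U₂, _, u1, u2, gmd_unitary a b hab, p1, q1, p2, q2⟩
end

section
/- Let A_1 and A_2 be 2×2 complex matrices, each with determinant 1. Then for every integer N ≥ 2 there exist three 2N × (2N−2) matrices U_1, U_2, V with orthonormal columns such that, for i = 1, 2, the (2N−2)×(2N−2) matrix U_iᴴ (I_N ⊗ A_i) V is upper triangular with all diagonal entries equal to 1. -/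
open Matrix Kronecker

/-- the unitary matrix with a given first column -/
noncomputable def frame (v : Fin 2 → ℂ) : Matrix (Fin 2) (Fin 2) ℂ :=
  !![v 0, -star (v 1); v 1, star (v 0)]

lemma frame_unitary (v : Fin 2 → ℂ) (hv : star (v 0) * v 0 + star (v 1) * v 1 = 1) :
    (frame v)ᴴ * frame v = 1 := by
  ext i j
  fin_cases i <;> fin_cases j <;>
    simp [frame, Matrix.mul_apply, Fin.sum_univ_two] at hv ⊢
  · exact hv
  · ring
  · ring
  · linear_combination hv

lemma frame_det (v : Fin 2 → ℂ) (hv : star (v 0) * v 0 + star (v 1) * v 1 = 1) :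
    (frame v).det = 1 := by
  rw [frame, Matrix.det_fin_two_of]
  linear_combination hv

lemma frame_conj_det (v : Fin 2 → ℂ) (hv : star (v 0) * v 0 + star (v 1) * v 1 = 1) :
    (frame v)ᴴ.det = 1 := by
  rw [Matrix.det_conjTranspose, frame_det v hv, star_one]

/-- the triangular form of a unit-determinant matrix -/
lemma tri_form (A : Matrix (Fin 2) (Fin 2) ℂ) (hA : A.det = 1) (v : Fin 2 → ℂ)
    (hv : star (v 0) * v 0 + star (v 1) * v 1 = 1) (r : ℝ) (hr : 0 < r)
    (h : star ((A *ᵥ v) 0) * (A *ᵥ v) 0 + star ((A *ᵥ v) 1) * (A *ᵥ v) 1 = (r : ℂ) ^ 2) :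
    ∃ Q : Matrix (Fin 2) (Fin 2) ℂ, Qᴴ * Q = 1 ∧
      (Qᴴ * A * frame v) 0 0 = r ∧ (Qᴴ * A * frame v) 1 0 = 0 ∧
      (Qᴴ * A * frame v) 1 1 = (r : ℂ)⁻¹ := by
  have hr' : (r : ℂ) ≠ 0 := by exact_mod_cast hr.ne'
  set w := A *ᵥ v with hw
  have hu : star (((r : ℂ)⁻¹ • w) 0) * ((r : ℂ)⁻¹ • w) 0
      + star (((r : ℂ)⁻¹ • w) 1) * ((r : ℂ)⁻¹ • w) 1 = 1 := by
    simp at h ⊢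
    field_simp
    linear_combination h
  have hcol : ∀ i, (A * frame v) i 0 = w i := by
    intro i
    fin_cases i <;> simp [hw, frame, Matrix.mul_apply, Fin.sum_univ_two]
  have h00 : ((frame ((r : ℂ)⁻¹ • w))ᴴ * A * frame v) 0 0 = r := by
    rw [Matrix.mul_assoc, Matrix.mul_apply, Fin.sum_univ_two, hcol, hcol]
    simp [frame] at h ⊢
    field_simp
    linear_combination h
  have h10 : ((frame ((r : ℂ)⁻¹ • w))ᴴ * A * frame v) 1 0 = 0 := by
    rw [Matrix.mul_assoc, Matrix.mul_apply, Fin.sum_univ_two, hcol, hcol]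
    simp [frame]
    ring
  refine ⟨frame ((r : ℂ)⁻¹ • w), frame_unitary _ hu, h00, h10, ?_⟩
  have hd : ((frame ((r : ℂ)⁻¹ • w))ᴴ * A * frame v).det = 1 := by
    rw [Matrix.det_mul, Matrix.det_mul, frame_conj_det _ hu, hA, frame_det _ hv]; simp
  rw [Matrix.det_fin_two, h00, h10] at hd
  apply eq_inv_of_mul_eq_one_left
  linear_combination hd

/-- sum of squared moduli, as a real number -/
noncomputable def nsq (v : Fin 2 → ℂ) : ℝ := Complex.normSq (v 0) + Complex.normSq (v 1)

lemma nsq_coe (v : Fin 2 → ℂ) : (nsq v : ℂ) = star (v 0) * v 0 + star (v 1) * v 1 := by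
  simp [nsq, Complex.normSq_eq_conj_mul_self]

lemma nsq_smul (c : ℝ) (v : Fin 2 → ℂ) : nsq ((c : ℂ) • v) = c ^ 2 * nsq v := by
  simp [nsq]; ring

lemma nsq_pos (v : Fin 2 → ℂ) (hv : v ≠ 0) : 0 < nsq v := by
  have h0 := Complex.normSq_nonneg (v 0)
  have h1 := Complex.normSq_nonneg (v 1)
  rcases eq_or_ne (v 0) 0 with h | h
  · have : v 1 ≠ 0 := by
      intro h'; apply hv; ext i; fin_cases i <;> simp [h, h']
    have := Complex.normSq_pos.2 this
    unfold nsq; linarith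
  · have := Complex.normSq_pos.2 h
    unfold nsq; linarith

/-- a nonzero vector preserved in norm -/
lemma exists_norm_pres (B : Matrix (Fin 2) (Fin 2) ℂ) (hB : B.det = 1) :
    ∃ w : Fin 2 → ℂ, w ≠ 0 ∧ nsq (B *ᵥ w) = nsq w := by
  set a : ℝ := Complex.normSq (B 0 0) + Complex.normSq (B 1 0) - 1 with ha
  set c : ℝ := Complex.normSq (B 0 1) + Complex.normSq (B 1 1) - 1 with hc
  set b : ℂ := star (B 0 0) * B 0 1 + star (B 1 0) * B 1 1 with hb
  have hdetG : a * c - Complex.normSq b ≤ 0 := by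
    rw [Matrix.det_fin_two] at hB
    have e1 := congrArg Complex.re hB
    have e2 := congrArg Complex.im hB
    simp at e1 e2
    have key : a * c - Complex.normSq b = 2 - (Complex.normSq (B 0 0) + Complex.normSq (B 1 0)
        + Complex.normSq (B 0 1) + Complex.normSq (B 1 1)) := by
      have : Complex.normSq (B 0 0 * B 1 1 - B 0 1 * B 1 0) = 1 := by rw [hB]; simp
      simp only [ha, hc, hb, Complex.normSq_apply] at this ⊢
      simp at this ⊢
      linear_combination this
    rw [key]
    simp only [Complex.normSq_apply]
    nlinarith [sq_nonneg ((B 0 0).re - (B 1 1).re), sq_nonneg ((B 0 0).im + (B 1 1).im),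
      sq_nonneg ((B 0 1).re + (B 1 0).re), sq_nonneg ((B 0 1).im - (B 1 0).im)]
  by_cases ha0 : a = 0
  · refine ⟨![1, 0], fun h => by simpa using congrFun h 0, ?_⟩
    simp [nsq, Matrix.mulVec, dotProduct, Fin.sum_univ_two]
    linarith
  · set s : ℝ := Real.sqrt (-(a * c - Complex.normSq b)) with hs
    have hs2 : s ^ 2 = -(a * c - Complex.normSq b) := Real.sq_sqrt (by linarith)
    refine ⟨![(s : ℂ) - b, a], fun h => ha0 (by simpa using congrFun h 1), ?_⟩
    have gen : ∀ w : Fin 2 → ℂ, nsq (B *ᵥ w) - nsq w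
        = a * Complex.normSq (w 0) + c * Complex.normSq (w 1) +
          2 * (b * star (w 0) * w 1).re := by
      intro w
      simp [ha, hc, hb, nsq, Matrix.mulVec, dotProduct, Fin.sum_univ_two, Complex.normSq_apply]
      ring
    have := gen ![(s : ℂ) - b, a]
    rw [← sub_eq_zero, this]
    simp [Complex.normSq_apply] at hs2 ⊢
    linear_combination a * hs2

lemma exists_common (A₁ A₂ : Matrix (Fin 2) (Fin 2) ℂ) (h₁ : A₁.det = 1) (h₂ : A₂.det = 1) :
    ∃ v : Fin 2 → ℂ, nsq v = 1 ∧ nsq (A₁ *ᵥ v) = nsq (A₂ *ᵥ v) ∧ 0 < nsq (A₂ *ᵥ v) := by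
  have hu : IsUnit A₂.det := by rw [h₂]; exact isUnit_one
  obtain ⟨w, hw, h⟩ := exists_norm_pres (A₁ * A₂⁻¹) (by
    rw [Matrix.det_mul, Matrix.det_nonsing_inv, h₁, h₂]; simp)
  have hA2 : A₂ *ᵥ (A₂⁻¹ *ᵥ w) = w := by
    rw [Matrix.mulVec_mulVec, Matrix.mul_nonsing_inv _ hu, Matrix.one_mulVec]
  rw [← Matrix.mulVec_mulVec] at h
  set u := A₂⁻¹ *ᵥ w
  have hu0 : u ≠ 0 := by
    intro h0; rw [h0, Matrix.mulVec_zero] at hA2; exact hw hA2.symm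
  have hp := nsq_pos u hu0
  have hc : 0 < (Real.sqrt (nsq u))⁻¹ ^ 2 := by positivity
  refine ⟨(((Real.sqrt (nsq u))⁻¹ : ℝ) : ℂ) • u, ?_, ?_, ?_⟩
  · rw [nsq_smul, inv_pow, Real.sq_sqrt hp.le, inv_mul_cancel₀ hp.ne']
  · rw [Matrix.mulVec_smul, Matrix.mulVec_smul, nsq_smul, nsq_smul, h, hA2]
  · rw [Matrix.mulVec_smul, nsq_smul, hA2]
    exact mul_pos hc (nsq_pos w hw)

/-- selection of basis vectors: first vector of copy `j + 1`, second vector of copy `j` -/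
def sel (M : ℕ) : Matrix (Fin (M + 1) × Fin 2) (Fin M × Fin 2) ℂ :=
  fun p q => if p = (if q.2 = 0 then (q.1.succ, 0) else (q.1.castSucc, 1)) then 1 else 0

def shift (M : ℕ) : Matrix (Fin M) (Fin M) ℂ :=
  fun i j => if i.succ = j.castSucc then 1 else 0

lemma sel_mid (M : ℕ) (R : Matrix (Fin 2) (Fin 2) ℂ) (h10 : R 1 0 = 0) :
    (sel M)ᴴ * ((1 : Matrix (Fin (M + 1)) (Fin (M + 1)) ℂ) ⊗ₖ R) * sel M
      = (1 : Matrix (Fin M) (Fin M) ℂ) ⊗ₖ !![R 0 0, 0; 0, R 1 1]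
        + shift M ⊗ₖ !![0, R 0 1; 0, 0] := by
  ext ⟨i, a⟩ ⟨j, b⟩
  have : ((sel M)ᴴ * ((1 : Matrix (Fin (M + 1)) (Fin (M + 1)) ℂ) ⊗ₖ R) * sel M) (i, a) (j, b)
      = ((1 : Matrix (Fin (M + 1)) (Fin (M + 1)) ℂ) ⊗ₖ R)
        (if a = 0 then (i.succ, 0) else (i.castSucc, 1))
        (if b = 0 then (j.succ, 0) else (j.castSucc, 1)) := by
    generalize hx : (if a = 0 then (i.succ, 0) else (i.castSucc, 1)
      : Fin (M + 1) × Fin 2) = x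
    generalize hy : (if b = 0 then (j.succ, 0) else (j.castSucc, 1)
      : Fin (M + 1) × Fin 2) = y
    have h1 : ∀ p, sel M p (i, a) = if p = x then 1 else 0 := fun p => by rw [← hx]; rfl
    have h2 : ∀ p, sel M p (j, b) = if p = y then 1 else 0 := fun p => by rw [← hy]; rfl
    simp only [Matrix.mul_apply, Matrix.conjTranspose_apply, h1, h2, apply_ite star, star_one,
      star_zero, ite_mul, mul_ite, one_mul, mul_one, zero_mul, mul_zero, Finset.sum_ite_eq',
      Finset.mem_univ, if_true]
  rw [this]
  fin_cases a <;> fin_cases b <;>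
    simp [Matrix.kroneckerMap_apply, Matrix.one_apply, shift, h10]

lemma sel_orth (M : ℕ) : (sel M)ᴴ * sel M = 1 := by
  have := sel_mid M 1 (by simp)
  rw [Matrix.one_kronecker_one, Matrix.mul_one] at this
  rw [this]
  ext ⟨i, a⟩ ⟨j, b⟩
  fin_cases a <;> fin_cases b <;>
    simp [Matrix.kroneckerMap_apply, Matrix.one_apply]

/-- the assembled isometry -/
noncomputable def asm (M : ℕ) (Q X : Matrix (Fin 2) (Fin 2) ℂ) :
    Matrix (Fin (M + 1) × Fin 2) (Fin M × Fin 2) ℂ :=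
  ((1 : Matrix (Fin (M + 1)) (Fin (M + 1)) ℂ) ⊗ₖ Q) * sel M *
    ((1 : Matrix (Fin M) (Fin M) ℂ) ⊗ₖ X)

lemma asm_mul (M : ℕ) (A Q X W Y : Matrix (Fin 2) (Fin 2) ℂ) :
    (asm M Q X)ᴴ * ((1 : Matrix (Fin (M + 1)) (Fin (M + 1)) ℂ) ⊗ₖ A) * asm M W Y
      = ((1 : Matrix (Fin M) (Fin M) ℂ) ⊗ₖ Xᴴ) * ((sel M)ᴴ *
        ((1 : Matrix (Fin (M + 1)) (Fin (M + 1)) ℂ) ⊗ₖ (Qᴴ * A * W)) * sel M) *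
        ((1 : Matrix (Fin M) (Fin M) ℂ) ⊗ₖ Y) := by
  have : (1 : Matrix (Fin (M + 1)) (Fin (M + 1)) ℂ) ⊗ₖ (Qᴴ * A * W)
      = ((1 : Matrix (Fin (M + 1)) (Fin (M + 1)) ℂ) ⊗ₖ Qᴴ) *
        ((1 : Matrix (Fin (M + 1)) (Fin (M + 1)) ℂ) ⊗ₖ A) *
        ((1 : Matrix (Fin (M + 1)) (Fin (M + 1)) ℂ) ⊗ₖ W) := by
    rw [← Matrix.mul_kronecker_mul, ← Matrix.mul_kronecker_mul]; simp
  rw [this]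
  simp only [asm, Matrix.conjTranspose_mul, Matrix.conjTranspose_kronecker,
    Matrix.conjTranspose_one, Matrix.mul_assoc]

lemma asm_orth (M : ℕ) (Q X : Matrix (Fin 2) (Fin 2) ℂ) (hQ : Qᴴ * Q = 1) (hX : Xᴴ * X = 1) :
    (asm M Q X)ᴴ * asm M Q X = 1 := by
  have := asm_mul M 1 Q X Q X
  rw [Matrix.mul_one, hQ, Matrix.one_kronecker_one, Matrix.mul_one,
    Matrix.mul_one, sel_orth, Matrix.mul_one, ← Matrix.mul_kronecker_mul, hX] at this
  rw [this]; simp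

lemma asm_tri (M : ℕ) (A Q X W Y : Matrix (Fin 2) (Fin 2) ℂ) (r : ℂ)
    (h00 : (Qᴴ * A * W) 0 0 = r) (h10 : (Qᴴ * A * W) 1 0 = 0)
    (h11 : (Qᴴ * A * W) 1 1 = r⁻¹)
    (t00 : (Xᴴ * !![r, 0; 0, r⁻¹] * Y) 0 0 = 1) (t10 : (Xᴴ * !![r, 0; 0, r⁻¹] * Y) 1 0 = 0)
    (t11 : (Xᴴ * !![r, 0; 0, r⁻¹] * Y) 1 1 = 1) :
    (∀ p q : Fin M × Fin 2, (q.1 < p.1 ∨ (q.1 = p.1 ∧ q.2 < p.2)) →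
      ((asm M Q X)ᴴ * ((1 : Matrix (Fin (M + 1)) (Fin (M + 1)) ℂ) ⊗ₖ A) * asm M W Y) p q = 0) ∧
    (∀ p, ((asm M Q X)ᴴ * ((1 : Matrix (Fin (M + 1)) (Fin (M + 1)) ℂ) ⊗ₖ A) * asm M W Y) p p
      = 1) := by
  rw [asm_mul, sel_mid _ _ h10, h00, h11, Matrix.mul_add, Matrix.add_mul,
    ← Matrix.mul_kronecker_mul, ← Matrix.mul_kronecker_mul, ← Matrix.mul_kronecker_mul,
    ← Matrix.mul_kronecker_mul]
  simp only [Matrix.one_mul, Matrix.mul_one]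
  generalize Xᴴ * !![r, 0; 0, r⁻¹] * Y = T at *
  constructor
  · rintro ⟨i, a⟩ ⟨j, b⟩ h
    have hs : shift M i j = 0 := by
      rw [shift, if_neg]
      intro h'
      have := congrArg Fin.val h'
      simp only [Fin.val_succ, Fin.val_castSucc] at this
      rcases h with h | ⟨h, -⟩
      · have : j.val < i.val := h
        omega
      · have : j.val = i.val := congrArg Fin.val h
        omega
    simp only [Matrix.add_apply, Matrix.kroneckerMap_apply, hs, zero_mul, add_zero]
    rcases h with h | ⟨h, h'⟩
    · have : i ≠ j := fun e => by simp [e] at h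
      simp [Matrix.one_apply, this]
    · have ha : a = 1 ∧ b = 0 := by
        simp only at h'
        omega
      rw [ha.1, ha.2, t10, mul_zero]
  · rintro ⟨i, a⟩
    have hs : shift M i i = 0 := by
      rw [shift, if_neg]
      intro h'
      have := congrArg Fin.val h'
      simp at this
    simp only [Matrix.add_apply, Matrix.kroneckerMap_apply, hs, zero_mul, add_zero]
    fin_cases a <;> simp [t00, t11]

/-- Nearly-optimal 2-GMD for `2 × 2` matrices: for unit-determinant complex
`2 × 2` matrices `A₁, A₂` and any `N ≥ 2`, there are `2N × (2N - 2)` matrices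
`U₁, U₂, V` with orthonormal columns simultaneously triangularizing the
block-diagonal extensions `I_N ⊗ Aᵢ` with all diagonal entries equal to `1`. -/
theorem nearly_optimal_twoGMD_two_by_two
    (A₁ A₂ : Matrix (Fin 2) (Fin 2) ℂ) (h₁ : A₁.det = 1) (h₂ : A₂.det = 1)
    (N : ℕ) (hN : 2 ≤ N) :
    ∃ U₁ U₂ V : Matrix (Fin N × Fin 2) (Fin (2 * N - 2)) ℂ,
      U₁ᴴ * U₁ = 1 ∧ U₂ᴴ * U₂ = 1 ∧ Vᴴ * V = 1 ∧
      (∀ k l : Fin (2 * N - 2), l < k →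
        (U₁ᴴ * ((1 : Matrix (Fin N) (Fin N) ℂ) ⊗ₖ A₁) * V) k l = 0) ∧
      (∀ k : Fin (2 * N - 2),
        (U₁ᴴ * ((1 : Matrix (Fin N) (Fin N) ℂ) ⊗ₖ A₁) * V) k k = 1) ∧
      (∀ k l : Fin (2 * N - 2), l < k →
        (U₂ᴴ * ((1 : Matrix (Fin N) (Fin N) ℂ) ⊗ₖ A₂) * V) k l = 0) ∧
      (∀ k : Fin (2 * N - 2),
        (U₂ᴴ * ((1 : Matrix (Fin N) (Fin N) ℂ) ⊗ₖ A₂) * V) k k = 1) := by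
  obtain ⟨M, rfl⟩ : ∃ M, N = M + 1 := ⟨N - 1, by omega⟩
  obtain ⟨v, hv, h12, hpos⟩ := exists_common A₁ A₂ h₁ h₂
  have hv' : star (v 0) * v 0 + star (v 1) * v 1 = 1 := by rw [← nsq_coe, hv]; simp
  set r : ℝ := Real.sqrt (nsq (A₂ *ᵥ v)) with hr
  have hr0 : 0 < r := Real.sqrt_pos.2 hpos
  have hr2 : r ^ 2 = nsq (A₂ *ᵥ v) := Real.sq_sqrt hpos.le
  obtain ⟨Q₁, hQ₁, a00, a10, a11⟩ := tri_form A₁ h₁ v hv' r hr0 (by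
    rw [← nsq_coe, h12, ← hr2]; push_cast; rfl)
  obtain ⟨Q₂, hQ₂, b00, b10, b11⟩ := tri_form A₂ h₂ v hv' r hr0 (by
    rw [← nsq_coe, ← hr2]; push_cast; rfl)
  have hrc : (r : ℂ) ≠ 0 := by exact_mod_cast hr0.ne'
  have hD : (!![(r : ℂ), 0; 0, (r : ℂ)⁻¹]).det = 1 := by
    rw [Matrix.det_fin_two_of]; field_simp; ring
  obtain ⟨y, hy, hy12, -⟩ := exists_common _ 1 hD Matrix.det_one
  rw [Matrix.one_mulVec, hy] at hy12
  have hy' : star (y 0) * y 0 + star (y 1) * y 1 = 1 := by rw [← nsq_coe, hy]; simp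
  obtain ⟨X, hX, t00, t10, t11⟩ := tri_form _ hD y hy' 1 one_pos (by
    rw [← nsq_coe, hy12]; simp)
  rw [Complex.ofReal_one] at t00 t11
  rw [inv_one] at t11
  obtain ⟨p1, p2⟩ := asm_tri M A₁ Q₁ X (frame v) (frame y) r a00 a10 a11 t00 t10 t11
  obtain ⟨q1, q2⟩ := asm_tri M A₂ Q₂ X (frame v) (frame y) r b00 b10 b11 t00 t10 t11
  let e : Fin (2 * (M + 1) - 2) ≃ Fin M × Fin 2 :=
    (finCongr (by omega)).trans (finProdFinEquiv (m := M) (n := 2)).symm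
  have he : ∀ k l : Fin (2 * (M + 1) - 2), l < k →
      ((e l).1 < (e k).1 ∨ ((e l).1 = (e k).1 ∧ (e l).2 < (e k).2)) := by
    intro k l h
    have h' : l.val < k.val := h
    simp only [e, Equiv.trans_apply, finProdFinEquiv_symm_apply, Fin.lt_def, Fin.ext_iff,
      Fin.coe_divNat, Fin.coe_modNat, finCongr_apply, Fin.val_cast]
    omega
  have orth : ∀ U : Matrix (Fin (M + 1) × Fin 2) (Fin M × Fin 2) ℂ, Uᴴ * U = 1 →
      (U.submatrix id e)ᴴ * U.submatrix id e = 1 := by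
    intro U hU
    rw [Matrix.conjTranspose_submatrix, Matrix.submatrix_mul _ _ _ _ _ Function.bijective_id |>.symm,
      hU, Matrix.submatrix_one_equiv]
  have prod : ∀ (U V : Matrix (Fin (M + 1) × Fin 2) (Fin M × Fin 2) ℂ)
      (B : Matrix (Fin (M + 1) × Fin 2) (Fin (M + 1) × Fin 2) ℂ) (k l),
      ((U.submatrix id e)ᴴ * B * V.submatrix id e) k l = (Uᴴ * B * V) (e k) (e l) := by
    intro U V B k l
    simp [Matrix.mul_apply, Matrix.conjTranspose_apply]
  refine ⟨(asm M Q₁ X).submatrix id e, (asm M Q₂ X).submatrix id e,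
    (asm M (frame v) (frame y)).submatrix id e, orth _ (asm_orth _ _ _ hQ₁ hX),
    orth _ (asm_orth _ _ _ hQ₂ hX),
    orth _ (asm_orth _ _ _ (frame_unitary v hv') (frame_unitary y hy')), ?_, ?_, ?_, ?_⟩
  · intro k l h; rw [prod]; exact p1 _ _ (he k l h)
  · intro k; rw [prod]; exact p2 _
  · intro k l h; rw [prod]; exact q1 _ _ (he k l h)
  · intro k; rw [prod]; exact q2 _
end

section
/- Let n ≥ 1 and let A_1 and A_2 be n×n complex matrices, each with determinant 1. Then for every integer N ≥ n there exist three nN × n(N−n+1) matrices U_1, U_2, V with orthonormal columns such that, for i = 1, 2, the n(N−n+1) × n(N−n+1) matrix U_iᴴ (I_N ⊗ A_i) V is upper triangular with all diagonal entries equal to 1. -/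
open Matrix Kronecker

def ext1 {n : ℕ} (X : Matrix (Fin n) (Fin n) ℂ) : Matrix (Fin (n+1)) (Fin (n+1)) ℂ :=
  Matrix.of (Fin.cons (Fin.cons 1 0) (fun i => Fin.cons 0 (X i)))

lemma ext1_unitary {n : ℕ} (X : Matrix (Fin n) (Fin n) ℂ) (h : Xᴴ * X = 1) :
    (ext1 X)ᴴ * ext1 X = 1 := by
  ext i j
  have h' := fun i j => congrFun (congrFun h i) j
  simp only [Matrix.mul_apply, conjTranspose_apply] at h' ⊢
  rw [Fin.sum_univ_succ]
  refine Fin.cases ?_ (fun i => ?_) i <;> refine Fin.cases ?_ (fun j => ?_) j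
  · simp [ext1]
  · simp [ext1, (Fin.succ_ne_zero _).symm]
  · simp [ext1]
  · simpa [ext1, Matrix.one_apply] using h' i j

/-- weights -/
lemma weights {n : ℕ} (lam : Fin (n+1) → ℝ) (h0 : ∀ i, 0 ≤ lam i) (hp : ∏ i, lam i = 1) :
    ∃ p : Fin (n+1) → ℝ, (∀ i, 0 ≤ p i) ∧ ∑ i, p i = 1 ∧ ∑ i, p i * lam i = 1 := by
  have h1 : ∃ i, 1 ≤ lam i := by
    by_contra! h
    have : ∏ i, lam i < ∏ i : Fin (n+1), (1:ℝ) := by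
      by_cases hz : ∃ i, lam i = 0
      · obtain ⟨i, hi⟩ := hz
        rw [Finset.prod_eq_zero (Finset.mem_univ i) hi]; simp
      · push Not at hz
        exact Finset.prod_lt_prod_of_nonempty (fun i _ => lt_of_le_of_ne (h0 i) (hz i).symm)
          (fun i _ => h i) Finset.univ_nonempty
    simp [hp] at this
  have h2 : ∃ i, lam i ≤ 1 := by
    by_contra! h
    have : ∏ i : Fin (n+1), (1:ℝ) < ∏ i, lam i :=
      Finset.prod_lt_prod_of_nonempty (fun i _ => one_pos)
          (fun i _ => h i) Finset.univ_nonempty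
    simp [hp] at this
  obtain ⟨i, hi⟩ := h1
  obtain ⟨j, hj⟩ := h2
  obtain ⟨a, b, ha, hb, hab, hs⟩ : (1:ℝ) ∈ segment ℝ (lam j) (lam i) := by
    rw [segment_eq_Icc (hj.trans hi)]; exact ⟨hj, hi⟩
  refine ⟨fun k => a * (if k = j then 1 else 0) + b * (if k = i then 1 else 0), ?_, ?_, ?_⟩
  · intro k; positivity
  · simp [Finset.sum_add_distrib, hab]
  · simpa [Finset.sum_add_distrib, add_mul] using hs

open scoped ComplexOrder in
lemma exists_unit {n : ℕ} (M : Matrix (Fin (n+1)) (Fin (n+1)) ℂ) (h : ‖M.det‖ = 1) :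
    ∃ v : Fin (n+1) → ℂ, star v ⬝ᵥ v = 1 ∧ star (M *ᵥ v) ⬝ᵥ (M *ᵥ v) = 1 := by
  have hH : (Mᴴ * M).IsHermitian := isHermitian_conjTranspose_mul_self M
  have hP : (Mᴴ * M).PosSemidef := posSemidef_conjTranspose_mul_self M
  have hprod : ∏ i, hH.eigenvalues i = 1 := by
    have := hH.det_eq_prod_eigenvalues
    rw [det_mul, det_conjTranspose] at this
    have h2 : star M.det * M.det = 1 := by
      have := Complex.conj_mul' M.det
      rw [h] at this; simpa using this
    rw [h2] at this
    apply Complex.ofReal_injective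
    push_cast
    simpa using this.symm
  obtain ⟨p, p0, p1, pl⟩ := weights _ (fun i => hP.eigenvalues_nonneg i) hprod
  set U : Matrix (Fin (n+1)) (Fin (n+1)) ℂ := (hH.eigenvectorUnitary : Matrix (Fin (n+1)) (Fin (n+1)) ℂ) with hU
  have hUU : Uᴴ * U = 1 := by
    simpa [star_eq_conjTranspose] using (Matrix.mem_unitaryGroup_iff').1 hH.eigenvectorUnitary.2
  have hD : Uᴴ * (Mᴴ * M) * U = diagonal (fun i => (hH.eigenvalues i : ℂ)) := by
    have := hH.conjStarAlgAut_star_eigenvectorUnitary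
    simpa [Unitary.conjStarAlgAut_apply, star_eq_conjTranspose, Function.comp_def] using this
  have key : ∀ (X : Matrix (Fin (n+1)) (Fin (n+1)) ℂ) (w : Fin (n+1) → ℂ),
    star (X *ᵥ w) ⬝ᵥ (X *ᵥ w) = star w ⬝ᵥ ((Xᴴ * X) *ᵥ w) := by
    intro X w
    rw [star_mulVec, ← mulVec_mulVec, dotProduct_mulVec, vecMul_vecMul, dotProduct_mulVec,dotProduct_mulVec, vecMul_vecMul]
  have sq : ∀ i, ((√(p i) : ℝ) : ℂ) * ((√(p i) : ℝ) : ℂ) = p i := by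
    intro i
    rw [← Complex.ofReal_mul, Real.mul_self_sqrt (p0 i)]
  refine ⟨U *ᵥ (fun i => ((√(p i) : ℝ) : ℂ)), ?_, ?_⟩
  · rw [key, hUU, one_mulVec]
    simp only [dotProduct, Pi.star_apply, Complex.star_def, Complex.conj_ofReal, sq]
    exact_mod_cast p1
  · rw [mulVec_mulVec, key, conjTranspose_mul]
    rw [show Uᴴ * Mᴴ * (M * U) = Uᴴ * (Mᴴ * M) * U by simp only [Matrix.mul_assoc], hD]
    simp only [dotProduct, Pi.star_apply, Complex.star_def, Complex.conj_ofReal, mulVec_diagonal]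
    rw [← Complex.ofReal_one, ← pl]
    push_cast
    refine Finset.sum_congr rfl fun i _ => ?_
    rw [← sq i]; ring

lemma extend_unitary {n : ℕ} (v : Fin (n+1) → ℂ) (h : star v ⬝ᵥ v = 1) :
    ∃ V : Matrix (Fin (n+1)) (Fin (n+1)) ℂ, Vᴴ * V = 1 ∧ ∀ i, V i 0 = v i := by
  obtain ⟨b, hb⟩ := Orthonormal.exists_orthonormalBasis_extension_of_card_eq
    (𝕜 := ℂ) (E := EuclideanSpace ℂ (Fin (n+1))) (ι := Fin (n+1)) (by simp)
    (v := fun _ => WithLp.toLp 2 v) (s := {0}) (by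
      rw [orthonormal_iff_ite]
      rintro ⟨i, rfl⟩ ⟨j, rfl⟩
      rw [EuclideanSpace.inner_eq_star_dotProduct, dotProduct_comm, if_pos rfl]
      exact h)
  refine ⟨Matrix.of fun i j => b j i, ?_, ?_⟩
  · ext i j
    have := orthonormal_iff_ite.1 b.orthonormal i j
    rw [EuclideanSpace.inner_eq_star_dotProduct] at this
    rw [Matrix.one_apply, ← this, Matrix.mul_apply, dotProduct]
    simp [mul_comm]
  · intro i
    simp [hb 0 rfl]

lemma gmd : ∀ (n : ℕ) (M : Matrix (Fin n) (Fin n) ℂ), ‖M.det‖ = 1 →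
    ∃ U V : Matrix (Fin n) (Fin n) ℂ, Uᴴ * U = 1 ∧ Vᴴ * V = 1 ∧
      (∀ i j, j < i → (Uᴴ * M * V) i j = 0) ∧ ∀ i, (Uᴴ * M * V) i i = 1
  | 0, M, _ => ⟨1, 1, by simp, by simp, fun i => i.elim0, fun i => i.elim0⟩
  | n+1, M, h => by
    obtain ⟨v, hv, hu⟩ := exists_unit M h
    obtain ⟨V, hV, hV0⟩ := extend_unitary v hv
    obtain ⟨U, hU, hU0⟩ := extend_unitary _ hu
    have nd : ∀ X : Matrix (Fin (n+1)) (Fin (n+1)) ℂ, Xᴴ * X = 1 → ‖X.det‖ = 1 := by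
      intro X hX
      have := congrArg (fun Y => ‖Y.det‖) hX
      simp only [det_mul, det_conjTranspose, norm_mul, norm_star, det_one, norm_one] at this
      nlinarith [norm_nonneg X.det]
    set W := Uᴴ * M * V with hW
    have hW0 : ∀ i, W i 0 = if i = 0 then 1 else 0 := by
      intro i
      have : W i 0 = (Uᴴ * U) i 0 := by
        rw [hW, Matrix.mul_assoc, Matrix.mul_apply, Matrix.mul_apply]
        refine Finset.sum_congr rfl fun k _ => ?_
        rw [hU0, Matrix.mul_apply, mulVec, dotProduct]
        simp [hV0]
      rw [this, hU, Matrix.one_apply]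
    have hWd : ‖(W.submatrix Fin.succ Fin.succ).det‖ = 1 := by
      have h1 : ‖W.det‖ = 1 := by
        rw [hW, det_mul, det_mul, det_conjTranspose, norm_mul, norm_mul, norm_star, nd U hU, nd V hV, h]
        simp
      rw [det_succ_column_zero, Fin.sum_univ_succ] at h1
      simpa [hW0] using h1
    obtain ⟨U', V', hU', hV', ht, hd⟩ := gmd n _ hWd
    have e : (U * ext1 U')ᴴ * M * (V * ext1 V') = (ext1 U')ᴴ * W * ext1 V' := by
      simp only [hW, conjTranspose_mul, Matrix.mul_assoc]
    have e0 : ∀ i, ((ext1 U')ᴴ * W * ext1 V') i 0 = if i = 0 then 1 else 0 := by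
      intro i
      rw [Matrix.mul_apply, Fin.sum_univ_succ, Matrix.mul_apply, Fin.sum_univ_succ]
      refine Fin.cases ?_ (fun i => ?_) i
      · simp [hW0, ext1]
      · simp [hW0, ext1]
    have es : ∀ i j : Fin n, ((ext1 U')ᴴ * W * ext1 V') i.succ j.succ =
        (U'ᴴ * W.submatrix Fin.succ Fin.succ * V') i j := by
      intro i j
      rw [Matrix.mul_apply, Fin.sum_univ_succ, Matrix.mul_apply]
      simp [Matrix.mul_apply, Fin.sum_univ_succ, ext1]
    refine ⟨U * ext1 U', V * ext1 V', ?_, ?_, ?_, ?_⟩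
    · rw [conjTranspose_mul, Matrix.mul_assoc, ← Matrix.mul_assoc Uᴴ, hU, Matrix.one_mul,
        ext1_unitary _ hU']
    · rw [conjTranspose_mul, Matrix.mul_assoc, ← Matrix.mul_assoc Vᴴ, hV, Matrix.one_mul,
        ext1_unitary _ hV']
    · intro i j hij
      rw [e]
      obtain ⟨i, rfl⟩ := Fin.exists_succ_eq.2 (Fin.ne_zero_of_lt hij)
      revert hij
      refine Fin.cases ?_ (fun j => ?_) j
      · intro _; rw [e0]; simp
      · intro hij; rw [es]; exact ht i j (Fin.succ_lt_succ_iff.1 hij)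
    · intro i
      rw [e]
      refine Fin.cases ?_ (fun i => ?_) i
      · rw [e0]; simp
      · rw [es]; exact hd i

lemma rq {n : ℕ} (M : Matrix (Fin n) (Fin n) ℂ) (h : IsUnit M.det) :
    ∃ V : Matrix (Fin n) (Fin n) ℂ, Vᴴ * V = 1 ∧ (M * V).IsUpperTriangular := by
  let f : Fin n → EuclideanSpace ℂ (Fin n) := fun j => WithLp.toLp 2 (fun i => M⁻¹ i j)
  let b := InnerProductSpace.gramSchmidtOrthonormalBasis (𝕜 := ℂ) (by simp) f
  let V : Matrix (Fin n) (Fin n) ℂ := Matrix.of fun i j => b j i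
  have hV : Vᴴ * V = 1 := by
    ext i j
    have := orthonormal_iff_ite.1 b.orthonormal i j
    rw [EuclideanSpace.inner_eq_star_dotProduct] at this
    rw [Matrix.one_apply, ← this, Matrix.mul_apply, dotProduct]
    simp [mul_comm, V]
  have hT : (Vᴴ * M⁻¹).IsUpperTriangular := by
    intro i j hij
    have := InnerProductSpace.gramSchmidtOrthonormalBasis_inv_triangular (𝕜 := ℂ) (by simp) f hij
    rw [EuclideanSpace.inner_eq_star_dotProduct, dotProduct] at this
    rw [Matrix.mul_apply, ← this]
    simp [mul_comm, V, f, b]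
  refine ⟨V, hV, ?_⟩
  have hV' : V * Vᴴ = 1 := mul_eq_one_comm.1 hV
  have h1 : (M * V) * (Vᴴ * M⁻¹) = 1 := by
    rw [Matrix.mul_assoc, ← Matrix.mul_assoc V, hV', Matrix.one_mul, mul_nonsing_inv _ h]
  have h2 : (Vᴴ * M⁻¹)⁻¹ = M * V := inv_eq_left_inv h1
  have : Invertible (Vᴴ * M⁻¹) := invertibleOfLeftInverse _ _ h1
  rw [← h2]
  exact blockTriangular_inv_of_blockTriangular hT

/-- position of entry `j` of window `t`. -/
def pos (n N : ℕ) (hN : n ≤ N) (x : Fin (N - n + 1) × Fin n) : Fin N × Fin n :=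
  (⟨x.1 + (n - 1 - x.2), by omega⟩, x.2)

lemma pos_inj (n N : ℕ) (hN : n ≤ N) : Function.Injective (pos n N hN) := by
  rintro ⟨t, j⟩ ⟨t', j'⟩ h
  simp only [pos, Prod.mk.injEq, Fin.mk.injEq] at h
  obtain ⟨h1, rfl⟩ := h
  ext <;> simp; omega

def idx (n L : ℕ) : Fin (n * L) ≃ Fin L × Fin n :=
  (finCongr (Nat.mul_comm n L)).trans finProdFinEquiv.symm

lemma idx_lt (n L : ℕ) (k l : Fin (n * L)) (h : l < k) :
    (idx n L l).1 < (idx n L k).1 ∨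
      ((idx n L l).1 = (idx n L k).1 ∧ (idx n L l).2 < (idx n L k).2) := by
  obtain ⟨⟨a, b⟩, rfl⟩ := (idx n L).symm.surjective k
  obtain ⟨⟨c, d⟩, rfl⟩ := (idx n L).symm.surjective l
  simp only [Equiv.apply_symm_apply]
  have h' : (d : ℕ) + n * c < b + n * a := by simpa [idx, Fin.lt_def] using h
  rcases lt_trichotomy c a with hc | hc | hc
  · exact Or.inl hc
  · subst hc; right; exact ⟨rfl, by simpa using h'⟩
  · exfalso
    have : (a : ℕ) + 1 ≤ c := hc
    have := Nat.mul_le_mul_left n this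
    have := b.2
    rw [Nat.mul_add] at *
    omega

/-- the big orthonormal matrices -/
noncomputable def big (n N : ℕ) (hN : n ≤ N) (Q X : Matrix (Fin n) (Fin n) ℂ) :
    Matrix (Fin N × Fin n) (Fin (n * (N - n + 1))) ℂ :=
  ((((1 : Matrix (Fin N) (Fin N) ℂ) ⊗ₖ Q).submatrix id (pos n N hN)) *
    ((1 : Matrix (Fin (N - n + 1)) (Fin (N - n + 1)) ℂ) ⊗ₖ X)).submatrix id
      (idx n (N - n + 1))

lemma big_mul (n N : ℕ) (hN : n ≤ N) (Q X P Y A : Matrix (Fin n) (Fin n) ℂ) :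
    (big n N hN Q X)ᴴ * ((1 : Matrix (Fin N) (Fin N) ℂ) ⊗ₖ A) * big n N hN P Y =
    (((1 : Matrix (Fin (N - n + 1)) (Fin (N - n + 1)) ℂ) ⊗ₖ Xᴴ) *
      (((1 : Matrix (Fin N) (Fin N) ℂ) ⊗ₖ (Qᴴ * A * P)).submatrix (pos n N hN) (pos n N hN)) *
      ((1 : Matrix (Fin (N - n + 1)) (Fin (N - n + 1)) ℂ) ⊗ₖ Y)).submatrix
      (idx n (N - n + 1)) (idx n (N - n + 1)) := by
  have h : ((1 : Matrix (Fin N) (Fin N) ℂ) ⊗ₖ (Qᴴ * A * P)) =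
      ((1 : Matrix (Fin N) (Fin N) ℂ) ⊗ₖ Q)ᴴ * ((1 : Matrix (Fin N) (Fin N) ℂ) ⊗ₖ A) *
        ((1 : Matrix (Fin N) (Fin N) ℂ) ⊗ₖ P) := by
    rw [conjTranspose_kronecker, ← mul_kronecker_mul, ← mul_kronecker_mul]
    simp
  have h3 : ((1 : Matrix (Fin (N - n + 1)) (Fin (N - n + 1)) ℂ) ⊗ₖ Xᴴ) =
      ((1 : Matrix (Fin (N - n + 1)) (Fin (N - n + 1)) ℂ) ⊗ₖ X)ᴴ := by
    rw [conjTranspose_kronecker]; simp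
  rw [h, h3]
  ext k l
  simp only [big, Matrix.submatrix_apply]
  generalize idx n (N - n + 1) = e
  generalize ((1 : Matrix (Fin (N - n + 1)) (Fin (N - n + 1)) ℂ) ⊗ₖ X) = X'
  generalize ((1 : Matrix (Fin (N - n + 1)) (Fin (N - n + 1)) ℂ) ⊗ₖ Y) = Y'
  generalize ((1 : Matrix (Fin N) (Fin N) ℂ) ⊗ₖ Q) = Q'
  generalize ((1 : Matrix (Fin N) (Fin N) ℂ) ⊗ₖ A) = A'
  generalize ((1 : Matrix (Fin N) (Fin N) ℂ) ⊗ₖ P) = P'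
  have h4 : (Q'ᴴ * A' * P').submatrix (pos n N hN) (pos n N hN) =
     (Q'.submatrix id (pos n N hN))ᴴ * A' * P'.submatrix id (pos n N hN) := by
    ext; simp [Matrix.mul_apply]
  rw [h4]
  have h5 : ∀ Z W : Matrix (Fin N × Fin n) (Fin (N - n + 1) × Fin n) ℂ,
      (Z.submatrix id e)ᴴ * A' * W.submatrix id e = (Zᴴ * A' * W).submatrix e e := by
    intro Z W; ext; simp [Matrix.mul_apply]
  rw [h5]
  simp only [conjTranspose_mul, Matrix.mul_assoc, Matrix.submatrix_apply]

lemma big_orth (n N : ℕ) (hN : n ≤ N) (Q X : Matrix (Fin n) (Fin n) ℂ)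
    (hQ : Qᴴ * Q = 1) (hX : Xᴴ * X = 1) : (big n N hN Q X)ᴴ * big n N hN Q X = 1 := by
  have := big_mul n N hN Q X Q X 1
  rw [one_kronecker_one, Matrix.mul_one, Matrix.mul_one, hQ, one_kronecker_one,
    submatrix_one _ (pos_inj n N hN), Matrix.mul_one, ← mul_kronecker_mul, hX, Matrix.mul_one,
    one_kronecker_one, submatrix_one_equiv] at this
  exact this

lemma big_entry (n N : ℕ) (hN : n ≤ N) (X Y R : Matrix (Fin n) (Fin n) ℂ)
    (a c : Fin (N - n + 1)) (b d : Fin n) :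
    (((1 : Matrix (Fin (N - n + 1)) (Fin (N - n + 1)) ℂ) ⊗ₖ Xᴴ) *
      (((1 : Matrix (Fin N) (Fin N) ℂ) ⊗ₖ R).submatrix (pos n N hN) (pos n N hN)) *
      ((1 : Matrix (Fin (N - n + 1)) (Fin (N - n + 1)) ℂ) ⊗ₖ Y)) (a, b) (c, d) =
    (Xᴴ * (Matrix.of fun j j' : Fin n => if (a : ℕ) + (n - 1 - j) = c + (n - 1 - j') then R j j' else 0)
      * Y) b d := by
  simp only [Matrix.mul_apply, Fintype.sum_prod_type, kroneckerMap_apply, Matrix.one_apply, pos,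
    Matrix.submatrix_apply, Matrix.of_apply, Fin.mk.injEq, ite_mul, one_mul, zero_mul, mul_ite,
    mul_zero]
  rw [Finset.sum_comm]
  refine Finset.sum_congr rfl fun y _ => ?_
  rw [Finset.sum_eq_single c (fun z _ hz => if_neg hz) (by simp), if_pos rfl]
  congr 1
  rw [Finset.sum_comm]
  refine Finset.sum_congr rfl fun x _ => ?_
  rw [Finset.sum_eq_single a]
  · simp
  · intro z _ hz
    simp [hz.symm]
  · simp

lemma core (n N : ℕ) (hN : n ≤ N) (A Q P X Y : Matrix (Fin n) (Fin n) ℂ) (r : Fin n → ℂ)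
    (hR : (Qᴴ * A * P).IsUpperTriangular) (hr : ∀ i, (Qᴴ * A * P) i i = r i)
    (ht : ∀ i j, j < i → (Xᴴ * diagonal r * Y) i j = 0)
    (hd : ∀ i, (Xᴴ * diagonal r * Y) i i = 1) :
    (∀ k l, l < k → ((big n N hN Q X)ᴴ * ((1 : Matrix (Fin N) (Fin N) ℂ) ⊗ₖ A) *
      big n N hN P Y) k l = 0) ∧
    (∀ k, ((big n N hN Q X)ᴴ * ((1 : Matrix (Fin N) (Fin N) ℂ) ⊗ₖ A) *
      big n N hN P Y) k k = 1) := by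
  rw [big_mul]
  generalize Qᴴ * A * P = R at *
  have hdiag : ∀ (a : Fin (N - n + 1)), (Matrix.of fun j j' : Fin n =>
      if (a : ℕ) + (n - 1 - j) = a + (n - 1 - j') then R j j' else 0) = diagonal r := by
    intro a
    ext j j'
    simp only [Matrix.of_apply, diagonal_apply]
    by_cases h : j = j'
    · subst h; simp [hr]
    · rw [if_neg h, if_neg]
      intro h'; apply h; ext; omega
  constructor
  · intro k l hkl
    have := idx_lt n _ k l hkl
    rw [Matrix.submatrix_apply]
    revert this
    rcases idx n (N - n + 1) k with ⟨a, b⟩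
    rcases idx n (N - n + 1) l with ⟨c, d⟩
    intro this
    rw [big_entry]
    rcases this with h | ⟨h, h'⟩
    · have hz : (Matrix.of fun j j' : Fin n =>
        if (a : ℕ) + (n - 1 - j) = c + (n - 1 - j') then R j j' else 0) = 0 := by
        ext j j'
        simp only [Matrix.of_apply, Matrix.zero_apply, ite_eq_right_iff]
        intro h'
        apply hR
        simp only [id, Fin.lt_def] at *
        omega
      rw [hz]; simp
    · simp only at h h'
      subst h
      rw [hdiag]; exact ht _ _ h'
  · intro k
    rw [Matrix.submatrix_apply]
    rcases idx n (N - n + 1) k with ⟨a, b⟩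
    rw [big_entry, hdiag]; exact hd b

/-- Nearly-optimal 2-GMD: for unit-determinant complex `n × n` matrices
`A₁, A₂` and any `N ≥ n`, there are `nN × n(N - n + 1)` matrices `U₁, U₂, V`
with orthonormal columns simultaneously triangularizing the block-diagonal
extensions `I_N ⊗ Aᵢ` with all diagonal entries equal to `1`. -/
theorem nearly_optimal_twoGMD (n : ℕ) (hn : 1 ≤ n)
    (A₁ A₂ : Matrix (Fin n) (Fin n) ℂ) (h₁ : A₁.det = 1) (h₂ : A₂.det = 1)
    (N : ℕ) (hN : n ≤ N) :
    ∃ U₁ U₂ V : Matrix (Fin N × Fin n) (Fin (n * (N - n + 1))) ℂ,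
      U₁ᴴ * U₁ = 1 ∧ U₂ᴴ * U₂ = 1 ∧ Vᴴ * V = 1 ∧
      (∀ k l : Fin (n * (N - n + 1)), l < k →
        (U₁ᴴ * ((1 : Matrix (Fin N) (Fin N) ℂ) ⊗ₖ A₁) * V) k l = 0) ∧
      (∀ k : Fin (n * (N - n + 1)),
        (U₁ᴴ * ((1 : Matrix (Fin N) (Fin N) ℂ) ⊗ₖ A₁) * V) k k = 1) ∧
      (∀ k l : Fin (n * (N - n + 1)), l < k →
        (U₂ᴴ * ((1 : Matrix (Fin N) (Fin N) ℂ) ⊗ₖ A₂) * V) k l = 0) ∧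
      (∀ k : Fin (n * (N - n + 1)),
        (U₂ᴴ * ((1 : Matrix (Fin N) (Fin N) ℂ) ⊗ₖ A₂) * V) k k = 1) := by
  have hinv : A₂ * A₂⁻¹ = 1 := mul_nonsing_inv _ (by simp [h₂])
  have hinv' : A₂⁻¹ * A₂ = 1 := nonsing_inv_mul _ (by simp [h₂])
  obtain ⟨Q, P, hQ, hP, ht, hd⟩ := gmd n (A₁ * A₂⁻¹) (by
    have := congrArg det hinv
    rw [det_mul, h₂, det_one, one_mul] at this
    rw [det_mul, h₁, this]; simp)
  have nd : ∀ X : Matrix (Fin n) (Fin n) ℂ, Xᴴ * X = 1 → ‖X.det‖ = 1 := by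
    intro X hX
    have := congrArg (fun Y => ‖Y.det‖) hX
    simp only [det_mul, det_conjTranspose, norm_mul, norm_star, det_one, norm_one] at this
    nlinarith [norm_nonneg X.det]
  have hPA : ‖(Pᴴ * A₂).det‖ = 1 := by
    rw [det_mul, det_conjTranspose, h₂, norm_mul, norm_star, nd P hP]; simp
  obtain ⟨V, hV, hR⟩ := rq (Pᴴ * A₂) (by
    rw [isUnit_iff_ne_zero]; intro h; rw [h] at hPA; simp at hPA)
  have hrdet : ‖(diagonal (fun i => (Pᴴ * A₂ * V) i i)).det‖ = 1 := by
    rw [det_diagonal, ← det_of_isUpperTriangular hR, det_mul, norm_mul, hPA, nd V hV]; simp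
  obtain ⟨X, Y, hX, hY, ht', hd'⟩ := gmd n _ hrdet
  have hP' : P * Pᴴ = 1 := mul_eq_one_comm.1 hP
  have hT : (Qᴴ * (A₁ * A₂⁻¹) * P).IsUpperTriangular := fun i j hij => ht i j hij
  have e : Qᴴ * A₁ * V = (Qᴴ * (A₁ * A₂⁻¹) * P) * (Pᴴ * A₂ * V) := by
    symm
    calc _ = Qᴴ * A₁ * A₂⁻¹ * (P * Pᴴ) * A₂ * V := by simp only [Matrix.mul_assoc]
      _ = Qᴴ * A₁ * (A₂⁻¹ * A₂) * V := by rw [hP', Matrix.mul_one]; simp only [Matrix.mul_assoc]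
      _ = _ := by rw [hinv', Matrix.mul_one]
  have hR1 : (Qᴴ * A₁ * V).IsUpperTriangular := by rw [e]; exact hT.mul hR
  have hr1 : ∀ i, (Qᴴ * A₁ * V) i i = (Pᴴ * A₂ * V) i i := by
    intro i
    rw [e, Matrix.mul_apply, Finset.sum_eq_single i, hd i, one_mul]
    · intro j _ hj
      rcases lt_or_gt_of_ne hj with h | h
      · rw [hT h, zero_mul]
      · rw [hR h, mul_zero]
    · simp
  obtain ⟨c1, c2⟩ := core n N hN A₁ Q V X Y _ hR1 hr1 ht' hd'
  obtain ⟨c3, c4⟩ := core n N hN A₂ P V X Y _ hR (fun _ => rfl) ht' hd'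
  exact ⟨big n N hN Q X, big n N hN P X, big n N hN V Y, big_orth n N hN Q X hQ hX,
    big_orth n N hN P X hP hX, big_orth n N hN V Y hV hY, c1, c2, c3, c4⟩
end

section
/- For real R > 0 let x = −(1 − 2^{−R/6}) √(1 + 2^{R/6} + 2^{R/3}), and let T_1 be the real 2×2 upper-triangular matrix with rows (2^{−R/12}, x) and (0, 2^{R/12}), and T_2 the diagonal matrix diag(2^{−R/12}, 2^{R/12}). Then there exist complex 2×2 unitary matrices U_1, U_2, V such that U_iᴴ T_i V is upper triangular with both diagonal entries equal to 1 for i = 1, 2, if and only if R ≤ 6 log₂((3 + √5)/2). -/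
open Matrix

theorem aux_fwd (T U V : Matrix (Fin 2) (Fin 2) ℂ) (hU : Uᴴ * U = 1)
    (h10 : (Uᴴ * T * V) 1 0 = 0) (h00 : (Uᴴ * T * V) 0 0 = 1) :
    Complex.normSq ((T * V) 0 0) + Complex.normSq ((T * V) 1 0) = 1 := by
  have hU' : U * Uᴴ = 1 := mul_eq_one_comm.mp hU
  have e : (Uᴴ * T * V)ᴴ * (Uᴴ * T * V) = (T * V)ᴴ * (T * V) := by
    have : (Uᴴ * T * V)ᴴ * (Uᴴ * T * V) = (T * V)ᴴ * (U * Uᴴ) * (T * V) := by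
      simp [conjTranspose_mul, Matrix.mul_assoc]
    rw [this, hU', Matrix.mul_one]
  have e0 := congrFun (congrFun e 0) 0
  rw [Matrix.mul_apply, Matrix.mul_apply, Fin.sum_univ_two, Fin.sum_univ_two] at e0
  simp only [conjTranspose_apply, h10, h00] at e0
  have e1 : ((Complex.normSq ((T * V) 0 0) + Complex.normSq ((T * V) 1 0) : ℝ) : ℂ) = 1 := by
    push_cast
    rw [Complex.normSq_eq_conj_mul_self, Complex.normSq_eq_conj_mul_self]
    simpa using e0.symm
  exact_mod_cast e1

/-- the unitary with first column `(p, q)` and determinant one -/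
def rotU (p q : ℂ) : Matrix (Fin 2) (Fin 2) ℂ := !![p, -star q; q, star p]

theorem rotU_unitary (p q : ℂ) (h : star p * p + star q * q = 1) :
    (rotU p q)ᴴ * rotU p q = 1 := by
  ext i j
  fin_cases i <;> fin_cases j <;> simp [rotU, Matrix.mul_apply, Fin.sum_univ_two] <;>
    simp at h <;> first | linear_combination h | ring

theorem aux_bwd (a b x v w : ℂ) (hab : a * b = 1)
    (hv : star v * v + star w * w = 1)
    (ht : star (a * v + x * w) * (a * v + x * w) + star (b * w) * (b * w) = 1) :
    ∃ U : Matrix (Fin 2) (Fin 2) ℂ, Uᴴ * U = 1 ∧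
      (∀ k l : Fin 2, l < k → (Uᴴ * !![a, x; 0, b] * rotU v w) k l = 0) ∧
      (∀ k : Fin 2, (Uᴴ * !![a, x; 0, b] * rotU v w) k k = 1) := by
  refine ⟨rotU (a * v + x * w) (b * w), rotU_unitary _ _ ht, ?_, ?_⟩
  · intro k l
    fin_cases k <;> fin_cases l <;>
      simp [rotU, Matrix.mul_apply, Fin.sum_univ_two]
    ring
  · intro k
    simp at hv ht
    fin_cases k <;>
      simp [rotU, Matrix.mul_apply, Fin.sum_univ_two]
    · linear_combination ht
    · linear_combination (a * b) * hv + hab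

theorem aux_main (a b x : ℝ) (hb : 1 < b) (hab : a * b = 1) (hx0 : x < 0) :
    (∃ U₁ U₂ V : Matrix (Fin 2) (Fin 2) ℂ,
      U₁ᴴ * U₁ = 1 ∧ U₂ᴴ * U₂ = 1 ∧ Vᴴ * V = 1 ∧
      (∀ k l : Fin 2, l < k → (U₁ᴴ * !![(a : ℂ), (x : ℂ); 0, (b : ℂ)] * V) k l = 0) ∧
      (∀ k : Fin 2, (U₁ᴴ * !![(a : ℂ), (x : ℂ); 0, (b : ℂ)] * V) k k = 1) ∧
      (∀ k l : Fin 2, l < k → (U₂ᴴ * !![(a : ℂ), 0; 0, (b : ℂ)] * V) k l = 0) ∧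
      (∀ k : Fin 2, (U₂ᴴ * !![(a : ℂ), 0; 0, (b : ℂ)] * V) k k = 1)) ↔ x ^ 2 ≤ 4 := by
  have hb0 : 0 < b := by linarith
  have ha0 : 0 < a := by
    by_contra h
    nlinarith
  constructor
  · rintro ⟨U₁, U₂, V, h1, h2, hV, h3, h4, h5, h6⟩
    have k1 := aux_fwd _ _ _ h1 (h3 1 0 (by decide)) (h4 0)
    have k2 := aux_fwd _ _ _ h2 (h5 1 0 (by decide)) (h6 0)
    have k3 := aux_fwd V V 1 hV (by simp [hV]) (by simp [hV])
    simp only [Matrix.mul_one] at k3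
    simp only [Matrix.mul_apply, Fin.sum_univ_two] at k1 k2
    simp [Complex.normSq_apply] at k1 k2 k3
    generalize (V 0 0).re = p at *
    generalize (V 0 0).im = q at *
    generalize (V 1 0).re = r at *
    generalize (V 1 0).im = s at *
    set P := p * p + q * q with hP
    set W := r * r + s * s with hW
    have e2 : a ^ 2 * P + b ^ 2 * W = 1 := by rw [hP, hW]; linarith
    have e3 : P + W = 1 := k3
    have e1 : 2 * a * (p * r + q * s) = - x * W := by
      have : x * (2 * a * (p * r + q * s) + x * W) = 0 := by rw [hW]; linarith
      rcases mul_eq_zero.mp this with h | h <;> linarith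
    have hPW : P = b ^ 2 * W := by
      have h1 : P * (b ^ 2 - 1) = (b ^ 2 * W) * (b ^ 2 - 1) := by
        have : b ^ 2 * (a ^ 2 * P + b ^ 2 * W) = b ^ 2 := by rw [e2]; ring
        have h' : b ^ 2 * a ^ 2 = 1 := by rw [← mul_pow, mul_comm, hab]; norm_num
        linear_combination (b ^ 2) * e3 - this + P * h'
      exact mul_right_cancel₀ (by nlinarith) h1
    have hW0 : 0 < W := by
      have : W * (b ^ 2 + 1) = 1 := by linarith
      by_contra h
      nlinarith [sq_nonneg b]
    have cs : (p * r + q * s) ^ 2 ≤ P * W := by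
      rw [hP, hW]; nlinarith [sq_nonneg (p * s - q * r)]
    have : x ^ 2 * W ^ 2 ≤ 4 * W ^ 2 := by
      calc x ^ 2 * W ^ 2 = 4 * a ^ 2 * (p * r + q * s) ^ 2 := by
            linear_combination (-(2 * a * (p * r + q * s)) + x * W) * e1
        _ ≤ 4 * a ^ 2 * (P * W) := by gcongr
        _ = 4 * W ^ 2 := by
            rw [hPW]; linear_combination 4 * W ^ 2 * (a * b + 1) * hab
    exact le_of_mul_le_mul_right this (by positivity)
  · intro hx
    -- v = r, w = p + i q
    set W : ℝ := 1 / (b ^ 2 + 1) with hW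
    have hW0 : 0 < W := by positivity
    have hW1 : W * (b ^ 2 + 1) = 1 := by rw [hW]; field_simp
    set r : ℝ := b * Real.sqrt W with hr
    have hsW : Real.sqrt W ^ 2 = W := Real.sq_sqrt hW0.le
    set p : ℝ := -x / 2 * Real.sqrt W with hp
    set q : ℝ := Real.sqrt (W - p ^ 2) with hq
    have hq2 : q ^ 2 = W - p ^ 2 := by
      apply Real.sq_sqrt
      have : p ^ 2 = x ^ 2 / 4 * W := by rw [hp, mul_pow, hsW]; ring
      rw [this]; nlinarith
    have hr2 : r ^ 2 = b ^ 2 * W := by rw [hr, mul_pow, hsW]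
    have hrp : r * p = b * (-x / 2) * W := by rw [hr, hp]; linear_combination b * (-x / 2) * hsW
    have hv : star (r : ℂ) * r + star ((p : ℂ) + q * Complex.I) * ((p : ℂ) + q * Complex.I) = 1 := by
      apply Complex.ext <;> simp
      · linarith
      · ring
    have ab2 : a ^ 2 * b ^ 2 = 1 := by rw [← mul_pow, hab]; norm_num
    have ht2 : star ((a : ℂ) * r + (0 : ℂ) * ((p : ℂ) + q * Complex.I)) *
        ((a : ℂ) * r + (0 : ℂ) * ((p : ℂ) + q * Complex.I)) +
        star ((b : ℂ) * ((p : ℂ) + q * Complex.I)) * ((b : ℂ) * ((p : ℂ) + q * Complex.I)) = 1 := by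
      apply Complex.ext <;> simp
      · linear_combination a ^ 2 * hr2 + b ^ 2 * hq2 + W * ab2 + hW1
      · ring
    have ht1 : star ((a : ℂ) * r + (x : ℂ) * ((p : ℂ) + q * Complex.I)) *
        ((a : ℂ) * r + (x : ℂ) * ((p : ℂ) + q * Complex.I)) +
        star ((b : ℂ) * ((p : ℂ) + q * Complex.I)) * ((b : ℂ) * ((p : ℂ) + q * Complex.I)) = 1 := by
      apply Complex.ext <;> simp
      · linear_combination a ^ 2 * hr2 + b ^ 2 * hq2 + W * ab2 + hW1 + x ^ 2 * hq2 +
          2 * a * x * hrp - x ^ 2 * W * hab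
      · ring
    have habC : (a : ℂ) * b = 1 := by exact_mod_cast hab
    obtain ⟨U₁, u1, u2, u3⟩ := aux_bwd a b x r ((p : ℂ) + q * Complex.I) habC hv ht1
    obtain ⟨U₂, w1, w2, w3⟩ := aux_bwd a b 0 r ((p : ℂ) + q * Complex.I) habC hv ht2
    exact ⟨U₁, U₂, _, u1, w1, rotU_unitary _ _ hv, u2, u3, w2, w3⟩

theorem aux_thr (y : ℝ) (hy : 1 < y) :
    (1 - y⁻¹) ^ 2 * (1 + y + y ^ 2) ≤ 4 ↔ y ≤ (3 + Real.sqrt 5) / 2 := by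
  have h5 : Real.sqrt 5 ^ 2 = 5 := Real.sq_sqrt (by norm_num)
  have h50 : 2 < Real.sqrt 5 := by
    rw [Real.lt_sqrt (by norm_num)]; norm_num
  have hy0 : 0 < y := by linarith
  have e : (1 - y⁻¹) ^ 2 * (1 + y + y ^ 2) - 4 =
      (y - (3 + Real.sqrt 5) / 2) *
        ((y - (3 - Real.sqrt 5) / 2) * (y ^ 2 + 2 * y + 1) / y ^ 2) := by
    have : (y - (3 + Real.sqrt 5) / 2) * (y - (3 - Real.sqrt 5) / 2) = y ^ 2 - 3 * y + 1 := by
      linear_combination (-1 / 4) * h5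
    rw [← mul_div_assoc, ← mul_assoc, this]
    field_simp
    ring
  have hpos : 0 < (y - (3 - Real.sqrt 5) / 2) * (y ^ 2 + 2 * y + 1) / y ^ 2 := by
    have : 0 < y - (3 - Real.sqrt 5) / 2 := by linarith
    positivity
  rw [← sub_nonpos, e, ← sub_nonpos (a := y)]
  constructor
  · intro h
    by_contra h'
    push Not at h'
    have := mul_pos h' hpos
    linarith
  · intro h
    exact mul_nonpos_of_nonpos_of_nonneg h hpos.le

/-- Exact 2-GMD for the triangular factors of the three-rate Gaussian rateless
problem at rate `R` exists iff `R ≤ 6 log₂((3 + √5)/2)`. Here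
`x = -(1 - 2^{-R/6}) √(1 + 2^{R/6} + 2^{R/3})`,
`T₁ = !![2^{-R/12}, x; 0, 2^{R/12}]` and `T₂ = diag(2^{-R/12}, 2^{R/12})`. -/
theorem three_rate_perfect_iff (R : ℝ) (hR : 0 < R)
    (x : ℝ)
    (hx : x = -(1 - (2 : ℝ) ^ (-R / 6)) *
      Real.sqrt (1 + (2 : ℝ) ^ (R / 6) + (2 : ℝ) ^ (R / 3))) :
    (∃ U₁ U₂ V : Matrix (Fin 2) (Fin 2) ℂ,
      U₁ᴴ * U₁ = 1 ∧ U₂ᴴ * U₂ = 1 ∧ Vᴴ * V = 1 ∧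
      (∀ k l : Fin 2, l < k →
        (U₁ᴴ * !![(((2 : ℝ) ^ (-R / 12) : ℝ) : ℂ), (x : ℂ);
                  0, (((2 : ℝ) ^ (R / 12) : ℝ) : ℂ)] * V) k l = 0) ∧
      (∀ k : Fin 2,
        (U₁ᴴ * !![(((2 : ℝ) ^ (-R / 12) : ℝ) : ℂ), (x : ℂ);
                  0, (((2 : ℝ) ^ (R / 12) : ℝ) : ℂ)] * V) k k = 1) ∧
      (∀ k l : Fin 2, l < k →
        (U₂ᴴ * !![(((2 : ℝ) ^ (-R / 12) : ℝ) : ℂ), 0;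
                  0, (((2 : ℝ) ^ (R / 12) : ℝ) : ℂ)] * V) k l = 0) ∧
      (∀ k : Fin 2,
        (U₂ᴴ * !![(((2 : ℝ) ^ (-R / 12) : ℝ) : ℂ), 0;
                  0, (((2 : ℝ) ^ (R / 12) : ℝ) : ℂ)] * V) k k = 1)) ↔
    R ≤ 6 * Real.logb 2 ((3 + Real.sqrt 5) / 2) := by
  have hy : 1 < (2 : ℝ) ^ (R / 6) := Real.one_lt_rpow (by norm_num) (by positivity)
  have hb : 1 < (2 : ℝ) ^ (R / 12) := Real.one_lt_rpow (by norm_num) (by positivity)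
  have hab : (2 : ℝ) ^ (-R / 12) * (2 : ℝ) ^ (R / 12) = 1 := by
    rw [← Real.rpow_add (by norm_num)]
    have : -R / 12 + R / 12 = 0 := by ring
    rw [this, Real.rpow_zero]
  have h3 : (2 : ℝ) ^ (R / 3) = ((2 : ℝ) ^ (R / 6)) ^ 2 := by
    rw [← Real.rpow_natCast, ← Real.rpow_mul (by norm_num)]
    congr 1
    push_cast
    ring
  have h6 : (2 : ℝ) ^ (-R / 6) = ((2 : ℝ) ^ (R / 6))⁻¹ := by
    rw [neg_div, Real.rpow_neg (by norm_num)]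
  rw [h3, h6] at hx
  have hinv : ((2 : ℝ) ^ (R / 6))⁻¹ < 1 := inv_lt_one_of_one_lt₀ hy
  have hS : 0 < 1 + (2 : ℝ) ^ (R / 6) + ((2 : ℝ) ^ (R / 6)) ^ 2 := by positivity
  have hx0 : x < 0 := by
    have := mul_pos (sub_pos.mpr hinv) (Real.sqrt_pos.mpr hS)
    rw [hx]
    linarith
  have hx2 : x ^ 2 = (1 - ((2 : ℝ) ^ (R / 6))⁻¹) ^ 2 *
      (1 + (2 : ℝ) ^ (R / 6) + ((2 : ℝ) ^ (R / 6)) ^ 2) := by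
    rw [hx, mul_pow, Real.sq_sqrt hS.le]
    ring
  rw [aux_main _ _ x hb hab hx0, hx2, aux_thr _ hy,
    ← Real.le_logb_iff_rpow_le (by norm_num) (by positivity)]
  constructor <;> intro h <;> linarith
end

section
/- Fix a real R > 0 and let G_1 = diag(2^{R/2}, 1), G_2 = diag(2^{R/4}, 2^{R/4}), and let V be (2^{R/2} + 1)^{−1/2} times the matrix with rows (1, 2^{R/4}) and (2^{R/4}, −1). Then V is a real orthogonal matrix, and there exist real orthogonal 2×2 matrices U_1, U_2 such that for i = 1, 2 the matrix U_iᵀ G_i V is upper triangular with both diagonal entries equal to 2^{R/4}. -/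
open Matrix

/-- The two-rate Gaussian rateless problem at rate `R`: with augmented
matrices `G₁ = diag(2^{R/2}, 1)` and `G₂ = diag(2^{R/4}, 2^{R/4})`, the
Erez–Trott–Wornell precoder
`V = (2^{R/2} + 1)^{-1/2} !![1, 2^{R/4}; 2^{R/4}, -1]` is orthogonal, and there
are real orthogonal `U₁, U₂` such that each `Uᵢᵀ Gᵢ V` is upper triangular with
both diagonal entries equal to `2^{R/4}`. -/
theorem two_rate_rateless_jet (R : ℝ) (hR : 0 < R) :
    ((Real.sqrt ((2 : ℝ) ^ (R / 2) + 1))⁻¹ •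
        !![(1 : ℝ), (2 : ℝ) ^ (R / 4); (2 : ℝ) ^ (R / 4), -1])ᵀ *
      ((Real.sqrt ((2 : ℝ) ^ (R / 2) + 1))⁻¹ •
        !![(1 : ℝ), (2 : ℝ) ^ (R / 4); (2 : ℝ) ^ (R / 4), -1]) = 1 ∧
    ∃ U₁ U₂ : Matrix (Fin 2) (Fin 2) ℝ,
      U₁ᵀ * U₁ = 1 ∧ U₂ᵀ * U₂ = 1 ∧
      (∀ k l : Fin 2, l < k →
        (U₁ᵀ * !![(2 : ℝ) ^ (R / 2), 0; 0, 1] *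
          ((Real.sqrt ((2 : ℝ) ^ (R / 2) + 1))⁻¹ •
            !![(1 : ℝ), (2 : ℝ) ^ (R / 4); (2 : ℝ) ^ (R / 4), -1])) k l = 0) ∧
      (∀ k : Fin 2,
        (U₁ᵀ * !![(2 : ℝ) ^ (R / 2), 0; 0, 1] *
          ((Real.sqrt ((2 : ℝ) ^ (R / 2) + 1))⁻¹ •
            !![(1 : ℝ), (2 : ℝ) ^ (R / 4); (2 : ℝ) ^ (R / 4), -1])) k k =
          (2 : ℝ) ^ (R / 4)) ∧
      (∀ k l : Fin 2, l < k →
        (U₂ᵀ * !![(2 : ℝ) ^ (R / 4), 0; 0, (2 : ℝ) ^ (R / 4)] *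
          ((Real.sqrt ((2 : ℝ) ^ (R / 2) + 1))⁻¹ •
            !![(1 : ℝ), (2 : ℝ) ^ (R / 4); (2 : ℝ) ^ (R / 4), -1])) k l = 0) ∧
      (∀ k : Fin 2,
        (U₂ᵀ * !![(2 : ℝ) ^ (R / 4), 0; 0, (2 : ℝ) ^ (R / 4)] *
          ((Real.sqrt ((2 : ℝ) ^ (R / 2) + 1))⁻¹ •
            !![(1 : ℝ), (2 : ℝ) ^ (R / 4); (2 : ℝ) ^ (R / 4), -1])) k k =
          (2 : ℝ) ^ (R / 4)) := by
  have h2 : (2 : ℝ) ^ (R / 2) = (2 : ℝ) ^ (R / 4) * (2 : ℝ) ^ (R / 4) := by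
    rw [← Real.rpow_add (by norm_num)]
    congr 1
    ring
  have hc : (Real.sqrt ((2 : ℝ) ^ (R / 2) + 1))⁻¹ * (Real.sqrt ((2 : ℝ) ^ (R / 2) + 1))⁻¹ *
      ((2 : ℝ) ^ (R / 4) * (2 : ℝ) ^ (R / 4) + 1) = 1 := by
    have hp : 0 < (2 : ℝ) ^ (R / 2) + 1 := by positivity
    rw [← mul_inv, Real.mul_self_sqrt hp.le, ← h2]
    exact inv_mul_cancel₀ hp.ne'
  generalize (Real.sqrt ((2 : ℝ) ^ (R / 2) + 1))⁻¹ = c at *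
  rw [h2]
  clear h2
  generalize (2 : ℝ) ^ (R / 4) = a at *
  refine ⟨?_, c • !![a, 1; 1, -a], c • !![1, a; a, -1], ?_, ?_, ?_, ?_, ?_, ?_⟩
  · ext i j
    fin_cases i <;> fin_cases j <;> simp [Matrix.mul_apply, Fin.sum_univ_two] <;> grind
  · ext i j
    fin_cases i <;> fin_cases j <;> simp [Matrix.mul_apply, Fin.sum_univ_two] <;> grind
  · ext i j
    fin_cases i <;> fin_cases j <;> simp [Matrix.mul_apply, Fin.sum_univ_two] <;> grind
  · intro i j h
    fin_cases i <;> fin_cases j <;> simp [Matrix.mul_apply, Fin.sum_univ_two] at h ⊢ <;> grind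
  · intro i
    fin_cases i <;> simp [Matrix.mul_apply, Fin.sum_univ_two] <;> grind
  · intro i j h
    fin_cases i <;> fin_cases j <;> simp [Matrix.mul_apply, Fin.sum_univ_two] at h ⊢ <;> grind
  · intro i
    fin_cases i <;> simp [Matrix.mul_apply, Fin.sum_univ_two] <;> grind
end
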